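/- There exists an absolute constant c ≥ 1 such that for every dimension d ≥ 2, every convex body C ⊆ ℝ^d, every centrally symmetric convex body D ⊆ ℝ^d, and every α > 0, the translative covering number N_D(C, α) satisfies c^{−d} · (λ_d(D°)·λ_d(C)) / (ω_d² · α^d) ≤ N_D(C, α) ≤ c^{d} · (λ_d(D°)·λ_d(C + α·D)) / (ω_d² · α^d), where λ_d is Lebesgue measure on ℝ^d and ω_d := λ_d(Euclidean unit ball of ℝ^d). -/

import Mathlib

open Set MeasureTheory Metric
open scoped Pointwise RealInnerProductSpace ENNReal

noncomputable section

abbrev Euc (d : ℕ) := EuclideanSpace ℝ (Fin d)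

/-- A convex body: a compact convex set with nonempty interior. -/
def IsConvexBody {d : ℕ} (K : Set (Euc d)) : Prop :=
  IsCompact K ∧ Convex ℝ K ∧ (interior K).Nonempty

/-- The polar of a set. -/
def polarSet {d : ℕ} (S : Set (Euc d)) : Set (Euc d) :=
  {y | ∀ x ∈ S, ⟪x, y⟫ ≤ 1}

/-- The Hilbert distance with respect to the body `K`. -/
def hilbertDist {d : ℕ} (K : Set (Euc d)) (x y : Euc d) : ℝ :=
  -(1 / 2) * Real.log ((1 - gauge ((fun k => k - x) '' K) (y - x)) *
    (1 - gauge ((fun k => k - y) '' K) (x - y)))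

/-- The Hilbert ball of radius `r` centered at `x`. -/
def hilbertBall {d : ℕ} (K : Set (Euc d)) (x : Euc d) (r : ℝ) : Set (Euc d) :=
  {y ∈ interior K | hilbertDist K x y ≤ r}

/-- The Hilbert covering number of `U` at scale `α` in the geometry induced by `K`. -/
def hilbertCov {d : ℕ} (K U : Set (Euc d)) (α : ℝ) : ℕ :=
  sInf {m : ℕ | ∃ x : Fin m → Euc d, (∀ i, x i ∈ interior K) ∧
    U ⊆ ⋃ i, hilbertBall K (x i) α}

/-- The translative covering number of `U` by translates of `α • D`. -/
def transCov {d : ℕ} (D U : Set (Euc d)) (α : ℝ) : ℕ :=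
  sInf {m : ℕ | ∃ x : Fin m → Euc d, U ⊆ ⋃ i, x i +ᵥ α • D}

/-- The Hilbert `α`-expansion of `G` in `K`. -/
def hilbertExpand {d : ℕ} (K G : Set (Euc d)) (α : ℝ) : Set (Euc d) :=
  {x ∈ interior K | sInf (hilbertDist K x '' G) ≤ α}

/-- The Lebesgue volume of the Euclidean unit ball in `ℝ^d`. -/
def ωd (d : ℕ) : ℝ := (volume (ball (0 : Euc d) 1)).toReal

/-- The Hilbert Finsler unit ball at `y` in the geometry induced by `K`. -/
def finslerBall {d : ℕ} (K : Set (Euc d)) (y : Euc d) : Set (Euc d) :=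
  {v | gauge ((fun k => k - y) '' K) v + gauge ((fun k => k - y) '' K) (-v) ≤ 2}

/-- The Hilbert Holmes–Thompson volume of `U` in the geometry induced by `K`. -/
def volH {d : ℕ} (K U : Set (Euc d)) : ℝ :=
  (1 / ωd d) * ∫ y in U, (volume (polarSet (finslerBall K y))).toReal

/-- The recentered Macbeath region `A(x) := (K ∩ (2x − K)) − x`. -/
def macbeathA {d : ℕ} (K : Set (Euc d)) (x : Euc d) : Set (Euc d) :=
  (fun k => k - x) '' (K ∩ ((fun k => (2 : ℝ) • x - k) '' K))

/-!
Comparing volumes with a cover, and with a maximal packing of translates of `α • D / 2`, bounds the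
covering number by multiples of `vol C / (α ^ d * vol D)` and `vol (C + α • D) / (α ^ d * vol D)`.
To replace `1 / vol D` by `vol D° / ω_d ^ 2` one needs that `vol D * vol D°` agrees up to a factor
`c ^ d` with its value `ω_d ^ 2` for the Euclidean ball.

For the upper bound, a weak Blaschke–Santaló inequality, let `F` be the Fourier–Laplace transform of
a smooth bump supported in `D` and equal to `1` on `D / 2`. It is holomorphic on complex lines, so
`|F 0| ^ 2` is at most the mean of `|F| ^ 2` over circles. Average over `(x, y) ∈ (d • D°) ^ 2`: the
point at angle `θ` of the circle is a measure preserving image of `(x, y)` whose imaginary part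
stays in `2d • D°`. There the exponential weight is bounded by `c ^ d` on `D`, and Plancherel in the
real part yields `(vol D / 2 ^ d) ^ 2 ≤ |F 0| ^ 2 ≤ c ^ d * vol D / vol (d • D°)`.

The lower bound is the Bourgain–Milman inequality. For a strongly monotone map `T` one has
`(2π) ^ d ≤ ∫∫ |det (DT x + DT y)| * exp (-(⟪T x, x⟫ + ⟪T y, y⟫))`: this is the change of variables
in a Gaussian integral for the maps `P + t • N`, continued analytically from real `t` to `t = i`.
Take for `T` a regularized gradient of the log-sum-exp function of a half-net of `D` with at most
`5 ^ d` points. Substituting `(x, y) ↦ (x + y, T x - T y)` then separates the right-hand side into a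
product of at most `c ^ d * d ^ d * vol D * vol D°`.
-/

open Filter Topology

section ConvexBodies

variable {d : ℕ} {K L : Set (Euc d)}

/-- A centrally symmetric convex body. -/
structure IsSymmConvexBody (K : Set (Euc d)) : Prop where
  isConvexBody : IsConvexBody K
  eq_neg : K = -K

lemma polarSet_antitone : Antitone (polarSet : Set (Euc d) → Set (Euc d)) :=
  fun _ _ hKL _ hy x hx ↦ hy x (hKL hx)

lemma convex_polarSet (K : Set (Euc d)) : Convex ℝ (polarSet K) := by
  intro x hx y hy a b ha hb hab z hz
  simp only [inner_add_right, inner_smul_right]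
  nlinarith [hx z hz, hy z hz]

lemma isClosed_polarSet (K : Set (Euc d)) : IsClosed (polarSet K) := by
  have : polarSet K = ⋂ x ∈ K, {y | ⟪x, y⟫ ≤ 1} := by ext y; simp [polarSet]
  rw [this]
  exact isClosed_biInter fun x _ ↦ isClosed_le (by fun_prop) (by fun_prop)

lemma polarSet_closedBall {r : ℝ} (hr : 0 < r) :
    polarSet (closedBall (0 : Euc d) r) = closedBall 0 r⁻¹ := by
  refine Subset.antisymm (fun y hy ↦ ?_) (fun y hy x hx ↦ ?_)
  · rw [mem_closedBall_zero_iff]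
    obtain rfl | hy0 := eq_or_ne y 0
    · simpa using hr.le
    have hpos : 0 < ‖y‖ := norm_pos_iff.2 hy0
    have hmem : (r / ‖y‖) • y ∈ closedBall (0 : Euc d) r := by
      rw [mem_closedBall_zero_iff, norm_smul, Real.norm_of_nonneg (by positivity),
        div_mul_cancel₀ _ hpos.ne']
    have h := hy _ hmem
    rw [real_inner_smul_left, real_inner_self_eq_norm_sq] at h
    rw [le_inv_comm₀ hpos hr, ← one_div, le_div_iff₀ hpos]
    calc r * ‖y‖ = r / ‖y‖ * ‖y‖ ^ 2 := by field_simp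
      _ ≤ 1 := h
  · rw [mem_closedBall_zero_iff] at hx hy
    calc ⟪x, y⟫ ≤ ‖x‖ * ‖y‖ := real_inner_le_norm _ _
      _ ≤ r * r⁻¹ := by gcongr
      _ = 1 := mul_inv_cancel₀ hr.ne'

lemma IsConvexBody.volume_ne_top (hK : IsConvexBody K) : volume K ≠ ∞ :=
  hK.1.measure_ne_top

lemma IsConvexBody.volume_ne_zero (hK : IsConvexBody K) : volume K ≠ 0 :=
  (Measure.measure_pos_of_nonempty_interior _ hK.2.2).ne'

lemma IsConvexBody.volume_toReal_pos (hK : IsConvexBody K) : 0 < (volume K).toReal :=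
  ENNReal.toReal_pos hK.volume_ne_zero hK.volume_ne_top

lemma volume_smul_toReal (K : Set (Euc d)) {a : ℝ} (ha : 0 ≤ a) :
    (volume (a • K)).toReal = a ^ d * (volume K).toReal := by
  rw [Measure.addHaar_smul_of_nonneg _ ha, finrank_euclideanSpace_fin, ENNReal.toReal_mul,
    ENNReal.toReal_ofReal (by positivity)]

namespace IsSymmConvexBody

lemma isCompact (hK : IsSymmConvexBody K) : IsCompact K := hK.isConvexBody.1

lemma convex (hK : IsSymmConvexBody K) : Convex ℝ K := hK.isConvexBody.2.1

lemma neg_mem (hK : IsSymmConvexBody K) {x : Euc d} (hx : x ∈ K) : -x ∈ K := by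
  rw [hK.eq_neg]
  simpa using hx

lemma mem_nhds_zero (hK : IsSymmConvexBody K) : K ∈ 𝓝 (0 : Euc d) := by
  obtain ⟨x, hx⟩ := hK.isConvexBody.2.2
  have hx' : -x ∈ interior K := by
    rw [hK.eq_neg, ← Set.image_neg_eq_neg]
    exact (Homeomorph.neg (Euc d)).image_interior K ▸ mem_image_of_mem _ hx
  refine mem_interior_iff_mem_nhds.1 ?_
  simpa using hK.convex.interior hx hx' one_half_pos.le one_half_pos.le (add_halves 1)

lemma zero_mem (hK : IsSymmConvexBody K) : (0 : Euc d) ∈ K := mem_of_mem_nhds hK.mem_nhds_zero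

lemma exists_closedBall_subset (hK : IsSymmConvexBody K) :
    ∃ r > 0, closedBall (0 : Euc d) r ⊆ K :=
  nhds_basis_closedBall.mem_iff.1 hK.mem_nhds_zero

lemma smul (hK : IsSymmConvexBody K) {a : ℝ} (ha : a ≠ 0) : IsSymmConvexBody (a • K) where
  isConvexBody := by
    refine ⟨hK.isCompact.smul a, hK.convex.smul a, ?_⟩
    rw [interior_smul₀ ha]
    exact hK.isConvexBody.2.2.smul_set
  eq_neg := by rw [← Set.smul_set_neg, ← hK.eq_neg]

lemma polar (hK : IsSymmConvexBody K) : IsSymmConvexBody (polarSet K) where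
  isConvexBody := by
    obtain ⟨r, hr, hrK⟩ := hK.exists_closedBall_subset
    obtain ⟨R, hR, hKR⟩ := hK.isCompact.isBounded.subset_closedBall_lt 0 0
    have hsub := polarSet_antitone hrK
    have hsup := polarSet_antitone hKR
    rw [polarSet_closedBall hr] at hsub
    rw [polarSet_closedBall hR] at hsup
    refine ⟨(isCompact_closedBall _ _).of_isClosed_subset (isClosed_polarSet K) hsub,
      convex_polarSet K, 0, mem_interior_iff_mem_nhds.2 ?_⟩
    exact Filter.mem_of_superset (closedBall_mem_nhds _ (inv_pos.2 hR)) hsup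
  eq_neg := by
    have h (y : Euc d) (hy : y ∈ polarSet K) : -y ∈ polarSet K := fun x hx ↦ by
      simpa using hy (-x) (hK.neg_mem hx)
    exact Subset.antisymm (fun y hy ↦ h y hy) fun y hy ↦ by simpa using h _ hy

lemma add_smul_self (hK : IsSymmConvexBody K) {a : ℝ} (ha : 0 ≤ a) :
    K + a • K = (1 + a) • K := by
  rw [hK.convex.add_smul zero_le_one ha, one_smul]

lemma half_smul_sub_half_smul (hK : IsSymmConvexBody K) :
    (1 / 2 : ℝ) • K - (1 / 2 : ℝ) • K = K := by
  rw [sub_eq_add_neg, ← Set.smul_set_neg, ← hK.eq_neg,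
    ← hK.convex.add_smul one_half_pos.le one_half_pos.le, add_halves, one_smul]

lemma smul_subset_smul (hK : IsSymmConvexBody K) {a b : ℝ} (ha : 0 ≤ a) (hab : a ≤ b) :
    a • K ⊆ b • K := by
  rw [← add_sub_cancel a b, hK.convex.add_smul ha (sub_nonneg.2 hab)]
  exact fun x hx ↦ ⟨x, hx, 0, ⟨0, hK.zero_mem, smul_zero _⟩, add_zero x⟩

end IsSymmConvexBody

lemma isSymmConvexBody_closedBall {r : ℝ} (hr : 0 < r) :
    IsSymmConvexBody (closedBall (0 : Euc d) r) where
  isConvexBody := ⟨isCompact_closedBall _ _, convex_closedBall _ _,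
    0, mem_interior_iff_mem_nhds.2 (closedBall_mem_nhds _ hr)⟩
  eq_neg := by simp

end ConvexBodies

section Covering

/-- The continuous analogue of Ruzsa's covering lemma: the centres of a maximal packing of
translates of `B` with centres in `C` also cover `C` by translates of `B - B`. -/
lemma exists_finset_cover_sub {E : Type*} [AddCommGroup E] [MeasurableSpace E] [MeasurableAdd E]
    (μ : Measure E) [μ.IsAddLeftInvariant] {B C : Set E} (hB : MeasurableSet B) (hB0 : μ B ≠ 0)
    (hCB : μ (C + B) ≠ ∞) :
    ∃ s : Finset E, ↑s ⊆ C ∧ C ⊆ ⋃ x ∈ s, (x +ᵥ (B - B)) ∧ s.card * μ B ≤ μ (C + B) := by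
  classical
  let Packing : Set (Finset E) := {s | ↑s ⊆ C ∧ (s : Set E).PairwiseDisjoint (· +ᵥ B)}
  have card_mul_le (s) (hs : s ∈ Packing) : s.card * μ B ≤ μ (C + B) := by
    calc s.card * μ B = μ (⋃ x ∈ s, (x +ᵥ B)) := by
          rw [measure_biUnion_finset hs.2 fun x _ ↦ hB.const_vadd x]
          simp only [measure_vadd, Finset.sum_const, nsmul_eq_mul]
      _ ≤ μ (C + B) := measure_mono <| iUnion₂_subset fun x hx ↦ by
          rintro _ ⟨b, hb, rfl⟩
          exact ⟨x, hs.1 hx, b, hb, rfl⟩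
  have hfin : (Finset.card '' Packing).Finite := by
    obtain ⟨N, hN⟩ := ENNReal.exists_nat_gt (ENNReal.div_lt_top hCB hB0).ne
    refine (finite_Iic N).subset ?_
    rintro _ ⟨s, hs, rfl⟩
    have := (ENNReal.le_div_iff_mul_le (.inl hB0) (.inr hCB)).2 (card_mul_le s hs)
    exact_mod_cast this.trans hN.le
  obtain ⟨s, hs, hmax⟩ := Finite.exists_maximalFor' Finset.card Packing hfin ⟨∅, by simp [Packing]⟩
  refine ⟨s, hs.1, fun z hz ↦ ?_, card_mul_le s hs⟩
  by_contra hzs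
  simp only [mem_iUnion, not_exists, mem_vadd_set, Set.mem_sub, not_and] at hzs
  have disj (x) (hx : x ∈ s) : Disjoint (z +ᵥ B) (x +ᵥ B) := by
    rw [Set.disjoint_left]
    rintro _ ⟨b, hb, rfl⟩ ⟨b', hb', h⟩
    refine hzs x hx _ ⟨b', hb', b, hb, rfl⟩ ?_
    simp only [vadd_eq_add] at h ⊢
    rw [← add_sub_assoc, h, add_sub_cancel_right]
  obtain ⟨b, hb⟩ := nonempty_of_measure_ne_zero hB0
  have hz_notMem : z ∉ s := fun h ↦ hzs z h (b - b) ⟨b, hb, b, hb, rfl⟩ (by simp)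
  have hinsert : insert z s ∈ Packing := by
    refine ⟨by simpa [insert_subset_iff] using ⟨hz, hs.1⟩, ?_⟩
    rw [Finset.coe_insert]
    exact hs.2.insert fun x hx _ ↦ disj x hx
  have := hmax hinsert (Finset.card_le_card (Finset.subset_insert z s))
  rw [Finset.card_insert_of_notMem hz_notMem] at this
  omega

variable {d : ℕ} {C D : Set (Euc d)} {α : ℝ}

lemma IsSymmConvexBody.exists_finset_cover (hD : IsSymmConvexBody D)
    (hC : Bornology.IsBounded C) :
    ∃ s : Finset (Euc d), ↑s ⊆ C ∧ C ⊆ ⋃ x ∈ s, (x +ᵥ D) ∧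
      s.card * volume ((1 / 2 : ℝ) • D) ≤ volume (C + (1 / 2 : ℝ) • D) := by
  have hD' := hD.smul one_half_pos.ne'
  simpa only [hD.half_smul_sub_half_smul] using exists_finset_cover_sub volume
    hD'.isCompact.measurableSet hD'.isConvexBody.volume_ne_zero
    (hC.add hD'.isCompact.isBounded).measure_lt_top.ne

lemma exists_fin_cover {s : Finset (Euc d)} (hs : C ⊆ ⋃ x ∈ s, (x +ᵥ D)) :
    ∃ x : Fin s.card → Euc d, C ⊆ ⋃ i, x i +ᵥ D := by
  refine ⟨fun i ↦ s.equivFin.symm i, fun z hz ↦ ?_⟩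
  obtain ⟨x, hx, hzx⟩ := mem_iUnion₂.1 (hs hz)
  exact mem_iUnion.2 ⟨s.equivFin ⟨x, hx⟩, by simpa using hzx⟩

lemma volume_le_card_mul_of_cover {ι : Type*} [Fintype ι] {x : ι → Euc d}
    (hx : C ⊆ ⋃ i, x i +ᵥ D) : volume C ≤ Fintype.card ι * volume D :=
  calc volume C ≤ ∑ i, volume (x i +ᵥ D) :=
        (measure_mono hx).trans (measure_iUnion_fintype_le _ _)
    _ = Fintype.card ι * volume D := by
        simp only [measure_vadd, Finset.sum_const, Finset.card_univ, nsmul_eq_mul]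

lemma IsSymmConvexBody.volume_le_transCov_mul (hD : IsSymmConvexBody D)
    (hC : Bornology.IsBounded C) (hα : 0 < α) :
    (volume C).toReal ≤ transCov D C α * (α ^ d * (volume D).toReal) := by
  have hαD := hD.smul hα.ne'
  obtain ⟨s, -, hs, -⟩ := hαD.exists_finset_cover hC
  obtain ⟨x, hx⟩ : ∃ x : Fin (transCov D C α) → Euc d, C ⊆ ⋃ i, x i +ᵥ α • D :=
    Nat.sInf_mem (s := {m | ∃ x : Fin m → Euc d, C ⊆ ⋃ i, x i +ᵥ α • D})
      ⟨_, exists_fin_cover hs⟩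
  have h := volume_le_card_mul_of_cover hx
  rw [Fintype.card_fin] at h
  rw [← volume_smul_toReal D hα.le]
  simpa using ENNReal.toReal_mono
    (ENNReal.mul_ne_top (by simp) hαD.isConvexBody.volume_ne_top) h

lemma IsSymmConvexBody.transCov_mul_le_volume (hD : IsSymmConvexBody D)
    (hC : Bornology.IsBounded C) (hα : 0 < α) :
    transCov D C α * ((α / 2) ^ d * (volume D).toReal) ≤ (volume (C + α • D)).toReal := by
  have hαD := hD.smul hα.ne'
  obtain ⟨s, -, hs, hcard⟩ := hαD.exists_finset_cover hC
  have hNs : transCov D C α ≤ s.card := Nat.sInf_le (exists_fin_cover hs)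
  have hsub : C + (1 / 2 : ℝ) • α • D ⊆ C + α • D := by
    simpa using add_subset_add_left (hαD.smul_subset_smul one_half_pos.le one_half_lt_one.le)
  have hle : (transCov D C α : ℝ≥0∞) * volume ((α / 2) • D) ≤ volume (C + α • D) := by
    rw [div_eq_inv_mul, ← one_div, mul_smul]
    grw [hNs, hcard, hsub]
  rw [← volume_smul_toReal D (by positivity)]
  simpa using ENNReal.toReal_mono (hC.add hαD.isCompact.isBounded).measure_lt_top.ne hle

end Covering

section HolomorphicIntegral

lemma differentiableOn_integral_of_dominated {X : Type*} [MeasurableSpace X] {μ : Measure X}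
    {U : Set ℂ} (hU : IsOpen U) {f : ℂ → X → ℂ} (hf_meas : ∀ w, AEStronglyMeasurable (f w) μ)
    (hf_diff : ∀ᵐ a ∂μ, DifferentiableOn ℂ (f · a) U) {b : X → ℝ} (hb : Integrable b μ)
    (hfb : ∀ᵐ a ∂μ, ∀ w ∈ U, ‖f w a‖ ≤ b a) :
    DifferentiableOn ℂ (fun w ↦ ∫ a, f w a ∂μ) U := by
  intro w₀ hw₀
  obtain ⟨r, hr, hrU⟩ := nhds_basis_closedBall.mem_iff.1 (hU.mem_nhds hw₀)
  have hr2 : 0 < r / 2 := by positivity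
  have hsub (w) (hw : w ∈ ball w₀ (r / 2)) : closedBall w (r / 2) ⊆ U :=
    (closedBall_subset_closedBall' (by linarith [mem_ball.1 hw])).trans hrU
  have hderiv : ∀ᵐ a ∂μ, ∀ w ∈ U, HasDerivAt (f · a) (deriv (f · a) w) w := by
    filter_upwards [hf_diff] with a ha w hw
    exact (ha.differentiableAt (hU.mem_nhds hw)).hasDerivAt
  have hmeas : AEStronglyMeasurable (fun a ↦ deriv (f · a) w₀) μ := by
    refine aestronglyMeasurable_of_tendsto_ae (𝓝[≠] w₀)
      (f := fun w a ↦ slope (f · a) w₀ w) (fun w ↦ ?_) ?_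
    · exact ((hf_meas w).sub (hf_meas w₀)).const_smul (w - w₀)⁻¹
    · filter_upwards [hderiv] with a ha
      exact (ha w₀ hw₀).tendsto_slope
  refine (hasDerivAt_integral_of_dominated_loc_of_deriv_le (F' := fun w a ↦ deriv (f · a) w)
    (bound := fun a ↦ b a / (r / 2)) (ball_mem_nhds w₀ hr2) (.of_forall hf_meas)
    (hb.mono' (hf_meas w₀) (hfb.mono fun a ha ↦ ha w₀ hw₀)) hmeas ?_ (hb.div_const _)
    ?_).2.differentiableAt.differentiableWithinAt
  · filter_upwards [hf_diff, hfb] with a ha hab w hw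
    refine Complex.norm_deriv_le_of_forall_mem_sphere_norm_le hr2 ?_ fun z hz ↦
      hab z (hsub w hw (sphere_subset_closedBall hz))
    exact DifferentiableOn.diffContOnCl (by
      rw [closure_ball _ hr2.ne']
      exact ha.mono (hsub w hw))
  · filter_upwards [hderiv] with a ha w hw
    exact ha w (hsub w hw (mem_closedBall_self hr2.le))

end HolomorphicIntegral

section FourierLaplace

variable {V : Type*} [NormedAddCommGroup V] [InnerProductSpace ℝ V] [FiniteDimensional ℝ V]
  [MeasurableSpace V] [BorelSpace V] {f : V → ℝ} {D : Set V}

/-- The Fourier–Laplace transform of `f`, at the complex frequency with real part `x` and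
imaginary part `y`. -/
def fourierLaplace (f : V → ℝ) (x y : V) : ℂ :=
  ∫ ξ, f ξ * Complex.exp (2 * Real.pi * (⟪ξ, y⟫ - Complex.I * ⟪ξ, x⟫))

lemma fourierLaplace_zero (f : V → ℝ) : fourierLaplace f 0 0 = ((∫ ξ, f ξ : ℝ) : ℂ) := by
  rw [← integral_complex_ofReal]
  simp [fourierLaplace]

lemma fourier_mul_exp_inner (f : V → ℝ) (x y : V) :
    FourierTransform.fourier (fun ξ ↦ (f ξ * Real.exp (2 * Real.pi * ⟪ξ, y⟫) : ℂ)) x =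
      fourierLaplace f x y := by
  rw [Real.fourier_eq, fourierLaplace]
  congr with ξ
  simp only [Circle.smul_def, smul_eq_mul, Real.fourierChar_apply, Complex.ofReal_exp]
  rw [mul_left_comm, ← Complex.exp_add]
  congr 2
  push_cast
  ring

lemma continuous_fourierLaplace (hf : Continuous f) (hfc : HasCompactSupport f) :
    Continuous fun p : V × V ↦ fourierLaplace f p.1 p.2 := by
  rw [← continuousOn_univ]
  refine continuousOn_integral_of_compact_support hfc ?_ fun p ξ _ hξ ↦ ?_
  · exact Continuous.continuousOn (by simp only [Function.uncurry_def]; fun_prop)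
  · simp [image_eq_zero_of_notMem_tsupport hξ]

lemma lintegral_enorm_fourierLaplace_sq (hf : ContDiff ℝ (⊤ : ℕ∞) f) (hfc : HasCompactSupport f)
    (y : V) :
    ∫⁻ x, ‖fourierLaplace f x y‖ₑ ^ 2 =
      ∫⁻ ξ, ENNReal.ofReal (f ξ ^ 2 * Real.exp (4 * Real.pi * ⟪ξ, y⟫)) := by
  let g : V → ℂ := fun ξ ↦ f ξ * Real.exp (2 * Real.pi * ⟪ξ, y⟫)
  have hg_smooth : ContDiff ℝ (⊤ : ℕ∞) g := by
    have hexp : ContDiff ℝ (⊤ : ℕ∞) fun ξ : V ↦ Real.exp (2 * Real.pi * ⟪ξ, y⟫) :=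
      (contDiff_const.mul (contDiff_id.inner ℝ contDiff_const)).exp
    exact (Complex.ofRealCLM.contDiff.comp hf).mul (Complex.ofRealCLM.contDiff.comp hexp)
  have hg_supp : HasCompactSupport g := (hfc.comp_left Complex.ofReal_zero).mul_right
  let G : SchwartzMap V ℂ := hg_supp.toSchwartzMap hg_smooth
  have lintegral_sq (F : SchwartzMap V ℂ) :
      ENNReal.ofReal (∫ x, ‖F x‖ ^ 2) = ∫⁻ x, ‖F x‖ₑ ^ 2 := by
    rw [ofReal_integral_eq_lintegral_ofReal ((F.memLp 2 volume).integrable_norm_pow two_ne_zero)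
      (.of_forall fun x ↦ by positivity)]
    simp only [ENNReal.ofReal_pow (norm_nonneg _), ofReal_norm]
  have hfourier (x : V) : FourierTransform.fourier G x = fourierLaplace f x y := by
    rw [SchwartzMap.fourier_coe]
    exact fourier_mul_exp_inner f x y
  calc ∫⁻ x, ‖fourierLaplace f x y‖ₑ ^ 2 = ∫⁻ x, ‖FourierTransform.fourier G x‖ₑ ^ 2 := by
        simp only [hfourier]
    _ = ∫⁻ ξ, ‖G ξ‖ₑ ^ 2 := by
        rw [← lintegral_sq, ← lintegral_sq, SchwartzMap.integral_norm_sq_fourier]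
    _ = _ := by
        refine lintegral_congr fun ξ ↦ ?_
        change ‖g ξ‖ₑ ^ 2 = _
        rw [← ofReal_norm, ← ENNReal.ofReal_pow (norm_nonneg _), norm_mul, mul_pow,
          Complex.norm_real, Complex.norm_real, Real.norm_eq_abs, sq_abs, Real.norm_eq_abs, sq_abs,
          ← Real.exp_nat_mul]
        ring_nf

lemma lintegral_enorm_fourierLaplace_sq_le (hf : ContDiff ℝ (⊤ : ℕ∞) f) (hD : IsCompact D)
    (hfD : Function.support f ⊆ D) (hf0 : ∀ ξ, 0 ≤ f ξ) (hf1 : ∀ ξ, f ξ ≤ 1) {y : V} {b : ℝ}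
    (hy : ∀ ξ ∈ D, ⟪ξ, y⟫ ≤ b) :
    ∫⁻ x, ‖fourierLaplace f x y‖ₑ ^ 2 ≤
      ENNReal.ofReal (Real.exp (4 * Real.pi * b)) * volume D := by
  rw [lintegral_enorm_fourierLaplace_sq hf (.of_support_subset_isCompact hD hfD),
    ← lintegral_indicator_const hD.measurableSet]
  refine lintegral_mono fun ξ ↦ ?_
  by_cases hξ : ξ ∈ D
  · rw [indicator_of_mem hξ]
    refine ENNReal.ofReal_le_ofReal ?_
    calc f ξ ^ 2 * Real.exp (4 * Real.pi * ⟪ξ, y⟫) ≤ 1 * Real.exp (4 * Real.pi * b) := by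
          gcongr
          exacts [pow_le_one₀ (hf0 ξ) (hf1 ξ), hy ξ hξ]
      _ = _ := one_mul _
  · rw [Function.notMem_support.1 fun h ↦ hξ (hfD h)]
    simp

lemma differentiableOn_integral_mul_cexp (hf : Continuous f) (hfc : HasCompactSupport f)
    {φ : V → ℂ} (hφ : Continuous φ) (R : ℝ) :
    DifferentiableOn ℂ (fun w ↦ ∫ ξ, f ξ * Complex.exp (w * φ ξ)) (ball 0 R) := by
  have hb : Integrable fun ξ ↦ |f ξ| * Real.exp (R * ‖φ ξ‖) :=
    Continuous.integrable_of_hasCompactSupport (by fun_prop) (hfc.comp_left abs_zero).mul_right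
  refine differentiableOn_integral_of_dominated isOpen_ball (fun w ↦ ?_)
    (.of_forall fun ξ ↦ by fun_prop) hb (.of_forall fun ξ w hw ↦ ?_)
  · exact Continuous.aestronglyMeasurable (by fun_prop)
  · rw [norm_mul, Complex.norm_real, Real.norm_eq_abs]
    gcongr
    refine (Complex.norm_exp_le_exp_norm _).trans (Real.exp_le_exp.2 ?_)
    rw [norm_mul]
    gcongr
    exact (mem_ball_zero_iff.1 hw).le

/-- The transform is holomorphic along the complex line through `x` and `y`; the bound is the mean
value property of its square on the unit circle of this line. -/
lemma enorm_fourierLaplace_zero_sq_le (hf : Continuous f) (hfc : HasCompactSupport f) (x y : V) :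
    ‖fourierLaplace f 0 0‖ₑ ^ 2 ≤ ENNReal.ofReal (2 * Real.pi)⁻¹ *
      ∫⁻ θ in Ioc 0 (2 * Real.pi), ‖fourierLaplace f (Real.cos θ • x + Real.sin θ • y)
        (Real.sin θ • x - Real.cos θ • y)‖ₑ ^ 2 := by
  let H (w : ℂ) : ℂ :=
    ∫ ξ, f ξ * Complex.exp (w * (-2 * Real.pi * (⟪ξ, y⟫ + Complex.I * ⟪ξ, x⟫)))
  have hH0 : H 0 = fourierLaplace f 0 0 := by simp [H, fourierLaplace]
  have hH (θ : ℝ) : H (circleMap 0 1 θ) = fourierLaplace f (Real.cos θ • x + Real.sin θ • y)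
      (Real.sin θ • x - Real.cos θ • y) := by
    simp only [H, fourierLaplace, circleMap_zero, Complex.exp_mul_I, inner_sub_right,
      inner_add_right, real_inner_smul_right]
    congr with ξ
    push_cast
    congr 2
    linear_combination (-2 * Real.pi * ⟪ξ, x⟫ * Complex.sin θ : ℂ) * Complex.I_mul_I
  have hHd : DifferentiableOn ℂ H (ball 0 2) :=
    differentiableOn_integral_mul_cexp hf hfc (by fun_prop) 2
  have hmean : Real.circleAverage (fun w ↦ H w ^ 2) 0 1 = H 0 ^ 2 := by
    refine DiffContOnCl.circleAverage (DifferentiableOn.diffContOnCl ?_)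
    rw [abs_one, closure_ball _ one_ne_zero]
    exact (hHd.mono (closedBall_subset_ball one_lt_two)).pow 2
  rw [Real.circleAverage_def, intervalIntegral.integral_of_le (by positivity)] at hmean
  rw [← hH0, ← enorm_pow, ← hmean, enorm_smul, Real.enorm_eq_ofReal (by positivity)]
  simp only [← hH, ← enorm_pow]
  gcongr
  exact enorm_integral_le_lintegral_enorm _

end FourierLaplace

section RotationReflection

variable {V : Type*} [NormedAddCommGroup V] [NormedSpace ℝ V]

lemma measurePreserving_of_involutive_linearMap [FiniteDimensional ℝ V] [MeasurableSpace V]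
    [BorelSpace V] (μ : Measure V) [μ.IsAddHaarMeasure]
    {R : V →ₗ[ℝ] V} (hR : Function.Involutive R) : MeasurePreserving R μ μ := by
  have hdet : LinearMap.det R * LinearMap.det R = 1 := by
    rw [← LinearMap.det_comp, show R ∘ₗ R = LinearMap.id from LinearMap.ext hR, LinearMap.det_id]
  refine ⟨R.continuous_of_finiteDimensional.measurable, ?_⟩
  rw [Measure.map_linearMap_addHaar_eq_smul_addHaar μ (left_ne_zero_of_mul_eq_one hdet), abs_inv,
    abs_eq_abs.2 (mul_self_eq_one_iff.1 hdet), abs_one, inv_one, ENNReal.ofReal_one, one_smul]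

/-- The rotation by `θ` of `V × V` followed by the reflection in the second factor, which makes it
an involution. -/
def rotReflect (V : Type*) [NormedAddCommGroup V] [NormedSpace ℝ V] (θ : ℝ) :
    V × V →ₗ[ℝ] V × V where
  toFun p := (Real.cos θ • p.1 + Real.sin θ • p.2, Real.sin θ • p.1 - Real.cos θ • p.2)
  map_add' p q := by ext <;> simp only [Prod.fst_add, Prod.snd_add] <;> module
  map_smul' a p := by ext <;> simp <;> module

lemma rotReflect_involutive (θ : ℝ) : Function.Involutive (rotReflect V θ) := by
  rintro ⟨x, y⟩
  have h := Real.sin_sq_add_cos_sq θ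
  refine Prod.ext ?_ ?_ <;> simp only [rotReflect, LinearMap.coe_mk, AddHom.coe_mk] <;>
    match_scalars <;> first | ring1 | linear_combination h

end RotationReflection

section Santalo

/-- The volume product of a body and its polar. -/
def mahlerVolume {d : ℕ} (D : Set (Euc d)) : ℝ :=
  (volume D).toReal * (volume (polarSet D)).toReal

variable {d : ℕ} {D : Set (Euc d)} {f : Euc d → ℝ} {ρ : ℝ}

lemma mem_smul_polarSet (hρ : 0 < ρ) {y : Euc d} :
    y ∈ ρ • polarSet D ↔ ∀ ξ ∈ D, ⟪ξ, y⟫ ≤ ρ := by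
  simp only [mem_smul_set_iff_inv_smul_mem₀ hρ.ne', polarSet, mem_ofPred_eq, inner_smul_right,
    inv_mul_le_iff₀ hρ, mul_one]

lemma IsSymmConvexBody.abs_inner_le (hD : IsSymmConvexBody D) (hρ : 0 < ρ) {ξ y : Euc d}
    (hy : y ∈ ρ • polarSet D) (hξ : ξ ∈ D) : |⟪ξ, y⟫| ≤ ρ := by
  rw [mem_smul_polarSet hρ] at hy
  exact abs_le'.2 ⟨hy ξ hξ, by simpa using hy (-ξ) (hD.neg_mem hξ)⟩

lemma IsSymmConvexBody.exists_smooth_cutoff (hD : IsSymmConvexBody D) :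
    ∃ f : Euc d → ℝ, ContDiff ℝ (⊤ : ℕ∞) f ∧ Function.support f ⊆ D ∧ (∀ ξ, 0 ≤ f ξ) ∧
      (∀ ξ, f ξ ≤ 1) ∧ ∀ ξ ∈ (1 / 2 : ℝ) • D, f ξ = 1 := by
  have hsub : (1 / 2 : ℝ) • D ⊆ interior D := by
    rintro _ ⟨x, hx, rfl⟩
    simpa using hD.convex.combo_interior_self_mem_interior
      (mem_interior_iff_mem_nhds.2 hD.mem_nhds_zero) hx one_half_pos one_half_pos.le (add_halves 1)
  obtain ⟨f, hf, hf01, hsupp, hf1⟩ := exists_contMDiff_support_eq_eq_one_iff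
    (modelWithCornersSelf ℝ (Euc d)) (n := ⊤) isOpen_interior
    (hD.isCompact.smul (1 / 2 : ℝ)).isClosed hsub
  exact ⟨f, hf.contDiff, hsupp.trans_subset interior_subset, fun ξ ↦ (hf01 ⟨ξ, rfl⟩).1,
    fun ξ ↦ (hf01 ⟨ξ, rfl⟩).2, fun ξ hξ ↦ (hf1 ξ).1 hξ⟩

lemma IsSymmConvexBody.rotReflect_snd_mem (hD : IsSymmConvexBody D) (hρ : 0 < ρ) (θ : ℝ)
    {p : Euc d × Euc d} (hp : p ∈ (ρ • polarSet D) ×ˢ (ρ • polarSet D)) :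
    (rotReflect (Euc d) θ p).2 ∈ (2 * ρ) • polarSet D := by
  refine (mem_smul_polarSet (by positivity)).2 fun ξ hξ ↦ ?_
  calc ⟪ξ, Real.sin θ • p.1 - Real.cos θ • p.2⟫
      = Real.sin θ * ⟪ξ, p.1⟫ - Real.cos θ * ⟪ξ, p.2⟫ := by
        rw [inner_sub_right, real_inner_smul_right, real_inner_smul_right]
    _ ≤ |Real.sin θ| * |⟪ξ, p.1⟫| + |Real.cos θ| * |⟪ξ, p.2⟫| := by
        rw [← abs_mul, ← abs_mul]
        exact (le_abs_self _).trans (abs_sub _ _)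
    _ ≤ 1 * ρ + 1 * ρ := by
        gcongr
        exacts [Real.abs_sin_le_one θ, hD.abs_inner_le hρ hp.1 hξ, Real.abs_cos_le_one θ,
          hD.abs_inner_le hρ hp.2 hξ]
    _ = 2 * ρ := by ring

lemma IsSymmConvexBody.setLIntegral_enorm_fourierLaplace_sq_le (hD : IsSymmConvexBody D)
    (hf : ContDiff ℝ (⊤ : ℕ∞) f) (hfD : Function.support f ⊆ D) (hf0 : ∀ ξ, 0 ≤ f ξ)
    (hf1 : ∀ ξ, f ξ ≤ 1) (hρ : 0 < ρ) :
    ∫⁻ p in univ ×ˢ (ρ • polarSet D), ‖fourierLaplace f p.1 p.2‖ₑ ^ 2 ≤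
      ENNReal.ofReal (Real.exp (4 * Real.pi * ρ)) * volume D * volume (ρ • polarSet D) := by
  have hFL := continuous_fourierLaplace hf.continuous
    (.of_support_subset_isCompact hD.isCompact hfD)
  have hFL2 : Measurable fun p : Euc d × Euc d ↦ ‖fourierLaplace f p.1 p.2‖ₑ ^ 2 :=
    ((ENNReal.continuous_pow 2).comp hFL.enorm).measurable
  rw [Measure.volume_eq_prod, setLIntegral_prod_symm _ hFL2.aemeasurable, ← setLIntegral_const]
  refine setLIntegral_mono measurable_const fun y hy ↦ ?_
  rw [setLIntegral_univ]
  exact lintegral_enorm_fourierLaplace_sq_le hf hD.isCompact hfD hf0 hf1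
    ((mem_smul_polarSet hρ).1 hy)

lemma IsSymmConvexBody.setLIntegral_fourierLaplace_rotReflect_le (hD : IsSymmConvexBody D)
    (hf : ContDiff ℝ (⊤ : ℕ∞) f) (hfD : Function.support f ⊆ D) (hf0 : ∀ ξ, 0 ≤ f ξ)
    (hf1 : ∀ ξ, f ξ ≤ 1) (hρ : 0 < ρ) (θ : ℝ) :
    ∫⁻ p in (ρ • polarSet D) ×ˢ (ρ • polarSet D),
        ‖fourierLaplace f (rotReflect (Euc d) θ p).1 (rotReflect (Euc d) θ p).2‖ₑ ^ 2 ≤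
      ENNReal.ofReal (Real.exp (4 * Real.pi * (2 * ρ))) * volume D *
        volume ((2 * ρ) • polarSet D) := by
  have hFL := continuous_fourierLaplace hf.continuous
    (.of_support_subset_isCompact hD.isCompact hfD)
  have hmp := measurePreserving_of_involutive_linearMap
    (volume.prod volume : Measure (Euc d × Euc d)) (rotReflect_involutive θ)
  have hQ : MeasurableSet ((univ : Set (Euc d)) ×ˢ ((2 * ρ) • polarSet D)) :=
    .prod .univ (hD.polar.isCompact.smul _).measurableSet
  refine le_trans ?_ (hD.setLIntegral_enorm_fourierLaplace_sq_le hf hfD hf0 hf1 (by positivity))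
  have hFL2 : Measurable fun p : Euc d × Euc d ↦ ‖fourierLaplace f p.1 p.2‖ₑ ^ 2 :=
    ((ENNReal.continuous_pow 2).comp hFL.enorm).measurable
  rw [Measure.volume_eq_prod, ← hmp.setLIntegral_comp_preimage hQ hFL2]
  exact lintegral_mono_set fun p hp ↦ ⟨mem_univ _, hD.rotReflect_snd_mem hρ θ hp⟩

lemma IsSymmConvexBody.volume_smul_polarSet_sq_mul_le (hD : IsSymmConvexBody D)
    (hf : ContDiff ℝ (⊤ : ℕ∞) f) (hfD : Function.support f ⊆ D) (hf0 : ∀ ξ, 0 ≤ f ξ)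
    (hf1 : ∀ ξ, f ξ ≤ 1) (hρ : 0 < ρ) :
    volume (ρ • polarSet D) ^ 2 * ‖fourierLaplace f 0 0‖ₑ ^ 2 ≤
      ENNReal.ofReal (Real.exp (4 * Real.pi * (2 * ρ))) * volume D *
        volume ((2 * ρ) • polarSet D) := by
  have hfc : HasCompactSupport f := .of_support_subset_isCompact hD.isCompact hfD
  have hFL := continuous_fourierLaplace hf.continuous hfc
  set P := ρ • polarSet D
  set M := ENNReal.ofReal (Real.exp (4 * Real.pi * (2 * ρ))) * volume D *
    volume ((2 * ρ) • polarSet D)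
  let F (θ : ℝ) (p : Euc d × Euc d) : ℝ≥0∞ :=
    ‖fourierLaplace f (rotReflect (Euc d) θ p).1 (rotReflect (Euc d) θ p).2‖ₑ ^ 2
  have hF : Measurable fun q : (Euc d × Euc d) × ℝ ↦ F q.2 q.1 := by
    refine ((ENNReal.continuous_pow 2).comp (hFL.comp (g := fun p ↦ fourierLaplace f p.1 p.2)
      (f := fun q : (Euc d × Euc d) × ℝ ↦ rotReflect (Euc d) q.2 q.1) ?_).enorm).measurable
    simp only [rotReflect, LinearMap.coe_mk, AddHom.coe_mk]
    fun_prop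
  calc volume P ^ 2 * ‖fourierLaplace f 0 0‖ₑ ^ 2
      = ∫⁻ _ in P ×ˢ P, ‖fourierLaplace f 0 0‖ₑ ^ 2 := by
        rw [setLIntegral_const, Measure.volume_eq_prod, Measure.prod_prod]
        ring
    _ ≤ ∫⁻ p in P ×ˢ P, ENNReal.ofReal (2 * Real.pi)⁻¹ * ∫⁻ θ in Ioc 0 (2 * Real.pi), F θ p :=
        lintegral_mono fun p ↦ enorm_fourierLaplace_zero_sq_le hf.continuous hfc p.1 p.2
    _ = ENNReal.ofReal (2 * Real.pi)⁻¹ * ∫⁻ θ in Ioc 0 (2 * Real.pi), ∫⁻ p in P ×ˢ P, F θ p := by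
        rw [lintegral_const_mul' _ _ ENNReal.ofReal_ne_top,
          lintegral_lintegral_swap hF.aemeasurable]
    _ ≤ ENNReal.ofReal (2 * Real.pi)⁻¹ * ∫⁻ _ in Ioc 0 (2 * Real.pi), M := by
        gcongr with θ
        exact hD.setLIntegral_fourierLaplace_rotReflect_le hf hfD hf0 hf1 hρ θ
    _ = M := by
        rw [setLIntegral_const, Real.volume_Ioc, sub_zero, mul_comm M, ← mul_assoc,
          ← ENNReal.ofReal_mul (by positivity), inv_mul_cancel₀ (by positivity),
          ENNReal.ofReal_one, one_mul]

lemma IsSymmConvexBody.half_pow_mul_volume_le_enorm_fourierLaplace (hD : IsSymmConvexBody D)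
    (hf : Continuous f) (hfD : Function.support f ⊆ D) (hf0 : ∀ ξ, 0 ≤ f ξ)
    (hf1 : ∀ ξ ∈ (1 / 2 : ℝ) • D, f ξ = 1) :
    (1 / 2) ^ d * (volume D).toReal ≤ ‖fourierLaplace f 0 0‖ := by
  have hK := hD.isCompact.smul (1 / 2 : ℝ)
  rw [fourierLaplace_zero, Complex.norm_real, ← volume_smul_toReal _ one_half_pos.le,
    ← Measure.real_def, ← integral_indicator_one hK.measurableSet]
  refine (integral_mono ((integrable_indicator_iff hK.measurableSet).2
    (integrableOn_const hK.measure_ne_top)) (hf.integrable_of_hasCompactSupport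
      (.of_support_subset_isCompact hD.isCompact hfD)) ?_).trans (Real.le_norm_self _)
  exact indicator_le' (fun ξ hξ ↦ (hf1 ξ hξ).ge) fun ξ _ ↦ hf0 ξ

/-- A weak form of the Blaschke–Santaló inequality. -/
lemma IsSymmConvexBody.mahlerVolume_mul_pow_le (hD : IsSymmConvexBody D) (hd : 1 ≤ d) :
    mahlerVolume D * d ^ d ≤ (8 * Real.exp (8 * Real.pi)) ^ d := by
  obtain ⟨f, hf, hfD, hf0, hf1, hfone⟩ := hD.exists_smooth_cutoff
  have hd0 : (0 : ℝ) < d := by exact_mod_cast hd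
  have hv := hD.isConvexBody.volume_toReal_pos
  have hw := hD.polar.isConvexBody.volume_toReal_pos
  have hFL := hD.half_pow_mul_volume_le_enorm_fourierLaplace hf.continuous hfD hf0 hfone
  have hexp : Real.exp (4 * Real.pi * (2 * d)) = Real.exp (8 * Real.pi) ^ d := by
    rw [← Real.exp_nat_mul]
    ring_nf
  have hfin := ENNReal.mul_ne_top (ENNReal.mul_ne_top
    (ENNReal.ofReal_ne_top (r := Real.exp (4 * Real.pi * (2 * d)))) hD.isConvexBody.volume_ne_top)
    (hD.polar.smul (mul_pos two_pos hd0).ne').isConvexBody.volume_ne_top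
  have key := ENNReal.toReal_mono hfin (hD.volume_smul_polarSet_sq_mul_le hf hfD hf0 hf1 hd0)
  simp only [ENNReal.toReal_mul, ENNReal.toReal_pow, toReal_enorm, volume_smul_toReal _ hd0.le,
    volume_smul_toReal _ (mul_pos two_pos hd0).le, hexp,
    ENNReal.toReal_ofReal (pow_nonneg (Real.exp_nonneg _) d)] at key
  unfold mahlerVolume
  set v := (volume D).toReal
  set w := (volume (polarSet D)).toReal
  refine le_of_mul_le_mul_right (a := (1 / 4) ^ d * d ^ d * w * v) ?_ (by positivity)
  calc v * w * d ^ d * ((1 / 4) ^ d * d ^ d * w * v)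
      = (d ^ d * w) ^ 2 * ((1 / 2) ^ d * v) ^ 2 := by
        rw [show (1 / 4 : ℝ) = (1 / 2) ^ 2 by norm_num, ← pow_mul, mul_comm 2, pow_mul]
        ring
    _ ≤ (d ^ d * w) ^ 2 * ‖fourierLaplace f 0 0‖ ^ 2 := by gcongr
    _ ≤ Real.exp (8 * Real.pi) ^ d * v * ((2 * d) ^ d * w) := key
    _ = (8 * Real.exp (8 * Real.pi)) ^ d * ((1 / 4) ^ d * d ^ d * w * v) := by
        rw [mul_pow 8, mul_pow 2, show (2 : ℝ) = 8 * (1 / 4) by norm_num, mul_pow 8]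
        ring

end Santalo

section StronglyMonotone

variable {V : Type*} [NormedAddCommGroup V] [InnerProductSpace ℝ V] {F : V → V} {κ : ℝ}

/-- Strong monotonicity of a vector field, with modulus `κ`; for `κ = 0` this is monotonicity. -/
def StronglyMonotone (κ : ℝ) (F : V → V) : Prop :=
  ∀ x y, κ * ‖x - y‖ ^ 2 ≤ ⟪F x - F y, x - y⟫

namespace StronglyMonotone

lemma injective (hF : StronglyMonotone κ F) (hκ : 0 < κ) : Function.Injective F := by
  intro x y hxy
  have h := hF x y
  rw [hxy, sub_self, inner_zero_left] at h
  have h0 : ‖x - y‖ ^ 2 = 0 := le_antisymm (nonpos_of_mul_nonpos_right h hκ) (sq_nonneg _)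
  exact sub_eq_zero.1 (norm_eq_zero.1 (pow_eq_zero_iff two_ne_zero |>.1 h0))

/-- With `η = κ / (K² + κ²)` the map `x ↦ x - η • (F x - b)` is a contraction. -/
lemma norm_sub_smul_sq_le {K : NNReal} (hF : StronglyMonotone κ F) (hFK : LipschitzWith K F)
    (hκ : 0 < κ) (x y : V) :
    ‖x - y - (κ / (K ^ 2 + κ ^ 2)) • (F x - F y)‖ ^ 2 ≤
      K ^ 2 / (K ^ 2 + κ ^ 2) * ‖x - y‖ ^ 2 := by
  set S := (K : ℝ) ^ 2 + κ ^ 2 with hS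
  have hS0 : 0 < S := by positivity
  have hlip : ‖F x - F y‖ ^ 2 ≤ K ^ 2 * ‖x - y‖ ^ 2 := by
    rw [← mul_pow]
    gcongr
    exact hFK.norm_sub_le x y
  calc ‖x - y - (κ / S) • (F x - F y)‖ ^ 2
      = ‖x - y‖ ^ 2 - 2 * (κ / S * ⟪F x - F y, x - y⟫) + (κ / S) ^ 2 * ‖F x - F y‖ ^ 2 := by
        rw [norm_sub_sq_real, real_inner_smul_right, real_inner_comm, norm_smul, mul_pow,
          Real.norm_eq_abs, sq_abs]
    _ ≤ ‖x - y‖ ^ 2 - 2 * (κ / S * (κ * ‖x - y‖ ^ 2)) + (κ / S) ^ 2 * (K ^ 2 * ‖x - y‖ ^ 2) := by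
        gcongr
        exact hF x y
    _ = (K ^ 2 / S - (κ ^ 2 / S) ^ 2) * ‖x - y‖ ^ 2 := by
        rw [show (K : ℝ) ^ 2 = S - κ ^ 2 by rw [hS]; ring]
        field_simp
        ring
    _ ≤ K ^ 2 / S * ‖x - y‖ ^ 2 := by
        gcongr
        exact sub_le_self _ (sq_nonneg _)

lemma surjective [CompleteSpace V] {K : NNReal} (hF : StronglyMonotone κ F)
    (hFK : LipschitzWith K F) (hκ : 0 < κ) : Function.Surjective F := by
  intro b
  have hS : (0 : ℝ) < K ^ 2 + κ ^ 2 := by positivity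
  let g : V → V := fun x ↦ x - (κ / (K ^ 2 + κ ^ 2)) • (F x - b)
  let q : ℝ := Real.sqrt (K ^ 2 / (K ^ 2 + κ ^ 2))
  have hq : q < 1 := by
    rw [Real.sqrt_lt' one_pos, one_pow, div_lt_one hS]
    exact lt_add_of_pos_right _ (by positivity)
  have hg : ContractingWith q.toNNReal g := by
    refine ⟨Real.toNNReal_lt_one.2 hq, LipschitzWith.of_dist_le' fun x y ↦ ?_⟩
    rw [dist_eq_norm, dist_eq_norm]
    refine le_of_sq_le_sq ?_ (by positivity)
    rw [mul_pow, Real.sq_sqrt (by positivity), show g x - g y =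
      x - y - (κ / (K ^ 2 + κ ^ 2)) • (F x - F y) by simp only [g]; module]
    exact hF.norm_sub_smul_sq_le hFK hκ x y
  have hfix : g hg.fixedPoint = hg.fixedPoint := hg.fixedPoint_isFixedPt
  refine ⟨hg.fixedPoint, sub_eq_zero.1 ?_⟩
  exact (smul_eq_zero.1 (sub_eq_self.1 hfix)).resolve_left (by positivity)

lemma le_inner_of_hasFDerivAt (hF : StronglyMonotone κ F) {F' : V →L[ℝ] V} {x : V}
    (hx : HasFDerivAt F F' x) (v : V) : κ * ‖v‖ ^ 2 ≤ ⟪F' v, v⟫ := by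
  have hlim := (hx.lim_real v).inner (tendsto_const_nhds (x := v) (f := Filter.atTop)) (𝕜 := ℝ)
  refine ge_of_tendsto hlim ?_
  filter_upwards [Filter.eventually_gt_atTop 0] with c hc
  have h := hF (x + c⁻¹ • v) x
  rw [add_sub_cancel_left, norm_smul, real_inner_smul_right, mul_pow, Real.norm_eq_abs, sq_abs] at h
  rw [real_inner_smul_left]
  calc κ * ‖v‖ ^ 2 = c ^ 2 * (κ * (c⁻¹ ^ 2 * ‖v‖ ^ 2)) := by field_simp
    _ ≤ c ^ 2 * (c⁻¹ * ⟪F (x + c⁻¹ • v) - F x, v⟫) := by gcongr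
    _ = c * ⟪F (x + c⁻¹ • v) - F x, v⟫ := by field_simp

end StronglyMonotone

variable [FiniteDimensional ℝ V]

lemma det_pos_of_coercive {L : V →L[ℝ] V} (hκ : 0 < κ)
    (hL : ∀ v, κ * ‖v‖ ^ 2 ≤ ⟪L v, v⟫) : 0 < L.det := by
  let f (t : ℝ) : ℝ := ((1 - t) • ContinuousLinearMap.id ℝ V + t • L).det
  have hf : Continuous f := ContinuousLinearMap.continuous_det.comp (by fun_prop)
  have hne (t : ℝ) (ht : t ∈ Icc (0 : ℝ) 1) : f t ≠ 0 := by
    intro hz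
    obtain ⟨v, hv, hv0⟩ := (Submodule.ne_bot_iff _).1 (LinearMap.det_eq_zero_iff_ker_ne_bot.1 hz)
    have hv' : (1 - t) • v + t • L v = 0 := hv
    have hinner : (1 - t) * ‖v‖ ^ 2 + t * ⟪L v, v⟫ = 0 := by
      rw [← real_inner_self_eq_norm_sq, ← real_inner_smul_left, ← real_inner_smul_left,
        ← inner_add_left, hv', inner_zero_left]
    have hcoef : 0 < (1 - t) + t * κ := by
      rcases ht.1.eq_or_lt with rfl | ht0
      · norm_num
      · linarith [ht.2, mul_pos ht0 hκ]
    have hnorm : 0 < ‖v‖ ^ 2 := by positivity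
    nlinarith [mul_le_mul_of_nonneg_left (hL v) ht.1, mul_pos hcoef hnorm]
  by_contra! hdet
  obtain ⟨t, ht, hft⟩ := intermediate_value_Icc' zero_le_one hf.continuousOn
    (show (0 : ℝ) ∈ Icc (f 1) (f 0) by simpa [f, ContinuousLinearMap.det] using hdet)
  exact hne t ht hft

lemma integral_exp_neg_norm_sq_mul_det_fderiv [MeasurableSpace V] [BorelSpace V] {K : NNReal}
    (hF : StronglyMonotone κ F) (hFK : LipschitzWith K F) (hκ : 0 < κ)
    (hF' : Differentiable ℝ F) :
    ∫ x, Real.exp (-‖F x‖ ^ 2) * (fderiv ℝ F x).det = Real.pi ^ (Module.finrank ℝ V / 2 : ℝ) := by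
  have hcov := integral_image_eq_integral_abs_det_fderiv_smul volume MeasurableSet.univ
    (fun x _ ↦ (hF' x).hasFDerivAt.hasFDerivWithinAt) (hF.injective hκ).injOn
    fun x ↦ Real.exp (-‖x‖ ^ 2)
  rw [image_univ, (hF.surjective hFK hκ).range_eq, setIntegral_univ, setIntegral_univ] at hcov
  have hgauss := GaussianFourier.integral_rexp_neg_mul_sq_norm (V := V) one_pos
  simp only [neg_one_mul, div_one] at hgauss
  rw [← hgauss, hcov]
  refine integral_congr_ae (.of_forall fun x ↦ ?_)
  have hdet := det_pos_of_coercive hκ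
    (hF.le_inner_of_hasFDerivAt (hF' x).hasFDerivAt)
  simp only [abs_of_pos hdet, smul_eq_mul, mul_comm]

end StronglyMonotone

section Pencil

variable {V : Type*} [NormedAddCommGroup V] [InnerProductSpace ℝ V]

/-- The quadratic form `‖x + w • y‖²`, extended to complex `w` as a polynomial in `w`. -/
def pencilNormSq (x y : V) (w : ℂ) : ℂ :=
  (‖x‖ ^ 2 : ℝ) + 2 * w * (⟪x, y⟫ : ℝ) + w ^ 2 * (‖y‖ ^ 2 : ℝ)

lemma pencilNormSq_ofReal (x y : V) (t : ℝ) : pencilNormSq x y t = (‖x + t • y‖ ^ 2 : ℝ) := by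
  rw [norm_add_sq_real, real_inner_smul_right, norm_smul, mul_pow, Real.norm_eq_abs, sq_abs]
  push_cast [pencilNormSq]
  ring

lemma re_pencilNormSq (x y : V) (w : ℂ) :
    (pencilNormSq x y w).re =
      ‖x‖ ^ 2 - ‖y‖ ^ 2 + 2 * w.re * ⟪x, y⟫ + (1 + w.re ^ 2 - w.im ^ 2) * ‖y‖ ^ 2 := by
  rw [pencilNormSq, Complex.add_re, Complex.add_re, Complex.ofReal_re, Complex.re_mul_ofReal,
    Complex.re_mul_ofReal, pow_two w, Complex.mul_re, Complex.mul_re, Complex.re_ofNat,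
    Complex.im_ofNat]
  ring

/-- A neighbourhood of the segment `[0, i]` on which the real part of `pencilNormSq x y` is nearly
bounded below by its value at `i`. -/
def pencilStrip (δ : ℝ) : Set ℂ := Ioo (-δ) δ ×ℂ Ioo (-(1 + δ)) (1 + δ)

lemma isOpen_pencilStrip (δ : ℝ) : IsOpen (pencilStrip δ) := isOpen_Ioo.reProdIm isOpen_Ioo

lemma isPreconnected_pencilStrip (δ : ℝ) : IsPreconnected (pencilStrip δ) :=
  (((convex_Ioo _ _).linear_preimage Complex.reLm).inter
    ((convex_Ioo _ _).linear_preimage Complex.imLm)).isPreconnected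

lemma norm_le_of_mem_pencilStrip {δ : ℝ} {w : ℂ} (hw : w ∈ pencilStrip δ) : ‖w‖ ≤ 1 + 2 * δ :=
  (Complex.norm_le_abs_re_add_abs_im w).trans (by linarith [abs_lt.2 hw.1, abs_lt.2 hw.2])

lemma le_re_pencilNormSq (x y : V) {δ : ℝ} (hδ : δ ≤ 1) {w : ℂ} (hw : w ∈ pencilStrip δ) :
    ‖x‖ ^ 2 - ‖y‖ ^ 2 - 4 * δ * (‖x‖ ^ 2 + ‖y‖ ^ 2) ≤ (pencilNormSq x y w).re := by
  have hre : |w.re| < δ := abs_lt.2 hw.1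
  have him : |w.im| < 1 + δ := abs_lt.2 hw.2
  have hδ0 : 0 < δ := (abs_nonneg _).trans_lt hre
  have hcross : |2 * w.re * ⟪x, y⟫| ≤ δ * (‖x‖ ^ 2 + ‖y‖ ^ 2) := by
    calc |2 * w.re * ⟪x, y⟫| = |w.re| * (2 * |⟪x, y⟫|) := by
          rw [abs_mul, abs_mul, abs_two]
          ring
      _ ≤ δ * (2 * (‖x‖ * ‖y‖)) := by
          gcongr
          exact abs_real_inner_le_norm x y
      _ ≤ δ * (‖x‖ ^ 2 + ‖y‖ ^ 2) := by
          gcongr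
          linarith [two_mul_le_add_sq ‖x‖ ‖y‖]
  have hcoef : -(3 * δ) ≤ 1 + w.re ^ 2 - w.im ^ 2 := by
    have him2 : w.im ^ 2 ≤ (1 + δ) ^ 2 := by
      rw [← sq_abs]
      gcongr
    nlinarith [sq_nonneg w.re]
  have hy := mul_le_mul_of_nonneg_right hcoef (sq_nonneg ‖y‖)
  rw [re_pencilNormSq]
  linarith [neg_le_of_abs_le hcross, mul_nonneg hδ0.le (sq_nonneg ‖x‖)]

/-- The determinant of `A + w • B`, extended to complex `w`. -/
def pencilDet (A B : V →L[ℝ] V) (w : ℂ) : ℂ :=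
  LinearMap.det ((A : V →ₗ[ℝ] V).baseChange ℂ + w • (B : V →ₗ[ℝ] V).baseChange ℂ)

lemma pencilDet_eq_det_toMatrix {ι : Type*} [Fintype ι] [DecidableEq ι] (b : Module.Basis ι ℝ V)
    (A B : V →L[ℝ] V) (w : ℂ) :
    pencilDet A B w = ((LinearMap.toMatrix b b A).map (algebraMap ℝ ℂ) +
      w • (LinearMap.toMatrix b b B).map (algebraMap ℝ ℂ)).det := by
  rw [pencilDet, ← LinearMap.det_toMatrix (Algebra.TensorProduct.basis ℂ b), map_add, map_smul,
    LinearMap.toMatrix_baseChange, LinearMap.toMatrix_baseChange]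

variable [FiniteDimensional ℝ V]

lemma pencilDet_ofReal (A B : V →L[ℝ] V) (t : ℝ) : pencilDet A B t = ((A + t • B).det : ℝ) := by
  rw [pencilDet, ContinuousLinearMap.det, ← Complex.coe_algebraMap, ← LinearMap.det_baseChange]
  congr 1
  rw [ContinuousLinearMap.toLinearMap_add, ContinuousLinearMap.toLinearMap_smul,
    LinearMap.baseChange_add, LinearMap.baseChange_smul, algebraMap_smul]

lemma continuous_pencilDet :
    Continuous fun q : (V →L[ℝ] V) × (V →L[ℝ] V) × ℂ ↦ pencilDet q.1 q.2.1 q.2.2 := by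
  let b := Module.finBasis ℝ V
  let toMat : (V →L[ℝ] V) →ₗ[ℝ] Matrix _ _ ℝ :=
    (LinearMap.toMatrix b b).toLinearMap ∘ₗ ContinuousLinearMap.coeLM ℝ
  have hmat : Continuous fun A : V →L[ℝ] V ↦ (toMat A).map (algebraMap ℝ ℂ) :=
    toMat.continuous_of_finiteDimensional.matrix_map Complex.continuous_ofReal
  simp only [pencilDet_eq_det_toMatrix b]
  exact ((hmat.comp continuous_fst).add (continuous_snd.snd.smul
    (hmat.comp continuous_snd.fst))).matrix_det

lemma differentiable_pencilDet (A B : V →L[ℝ] V) : Differentiable ℂ (pencilDet A B) := by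
  simp only [funext (pencilDet_eq_det_toMatrix (Module.finBasis ℝ V) A B), Matrix.det_apply,
    Matrix.add_apply, Matrix.smul_apply]
  fun_prop

lemma exists_norm_pencilDet_le (V : Type*) [NormedAddCommGroup V] [InnerProductSpace ℝ V]
    [FiniteDimensional ℝ V] (r : ℝ) : ∃ M, ∀ A B : V →L[ℝ] V, ∀ w : ℂ,
      ‖A‖ ≤ r → ‖B‖ ≤ r → ‖w‖ ≤ r → ‖pencilDet A B w‖ ≤ M := by
  have := FiniteDimensional.proper ℝ (V →L[ℝ] V)
  obtain ⟨M, hM⟩ := (isCompact_closedBall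
    (0 : (V →L[ℝ] V) × (V →L[ℝ] V) × ℂ) r).exists_bound_of_continuousOn
      continuous_pencilDet.continuousOn
  exact ⟨M, fun A B w hA hB hw ↦ hM (A, B, w) (by simp [Prod.norm_def, hA, hB, hw])⟩

end Pencil

section AnalyticContinuation

lemma norm_sq_le_of_lipschitzWith {V W : Type*} [SeminormedAddCommGroup V]
    [SeminormedAddCommGroup W] {K : NNReal} {N : V → W} (hN : LipschitzWith K N) (p : V) :
    ‖N p‖ ^ 2 ≤ 2 * ‖N 0‖ ^ 2 + 2 * K ^ 2 * ‖p‖ ^ 2 := by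
  have hsub := hN.norm_sub_le p 0
  rw [sub_zero] at hsub
  calc ‖N p‖ ^ 2 ≤ (‖N 0‖ + K * ‖p‖) ^ 2 := by
        gcongr
        linarith [norm_sub_norm_le (N p) (N 0)]
    _ ≤ 2 * (‖N 0‖ ^ 2 + (K * ‖p‖) ^ 2) := add_sq_le
    _ = 2 * ‖N 0‖ ^ 2 + 2 * K ^ 2 * ‖p‖ ^ 2 := by ring

variable {V : Type*} [NormedAddCommGroup V] [InnerProductSpace ℝ V] {P N : V → V} {κ ε C : ℝ}
  {K : NNReal}

lemma StronglyMonotone.add_smul (hP : StronglyMonotone κ P) (hN : LipschitzWith K N) (t : ℝ) :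
    StronglyMonotone (κ - |t| * K) (P + t • N) := by
  intro x y
  have hN' : |t * ⟪N x - N y, x - y⟫| ≤ |t| * K * ‖x - y‖ ^ 2 := by
    calc |t * ⟪N x - N y, x - y⟫| ≤ |t| * (‖N x - N y‖ * ‖x - y‖) := by
          rw [abs_mul]
          gcongr
          exact abs_real_inner_le_norm _ _
      _ ≤ |t| * (K * ‖x - y‖ * ‖x - y‖) := by
          gcongr
          exact hN.norm_sub_le x y
      _ = |t| * K * ‖x - y‖ ^ 2 := by ring
  have hsum : (P + t • N) x - (P + t • N) y = (P x - P y) + t • (N x - N y) := by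
    simp only [Pi.add_apply, Pi.smul_apply]
    module
  rw [hsum, inner_add_left, real_inner_smul_left]
  linarith [hP x y, neg_le_of_abs_le hN']

/-- The pull-back of the density `exp (-‖x‖²) dx` by `P + w • N`, extended to complex `w`. -/
def pencilIntegrand (P N : V → V) (w : ℂ) (p : V) : ℂ :=
  Complex.exp (-pencilNormSq (P p) (N p) w) * pencilDet (fderiv ℝ P p) (fderiv ℝ N p) w

lemma exists_le_re_pencilNormSq (hPK : LipschitzWith K P) (hNK : LipschitzWith K N) (hε : 0 < ε)
    (hPN : ∀ p, ε * ‖p‖ ^ 2 - C ≤ ‖P p‖ ^ 2 - ‖N p‖ ^ 2) :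
    ∃ δ ∈ Ioc (0 : ℝ) 1, ∃ C', ∀ w ∈ pencilStrip δ, ∀ p,
      ε / 2 * ‖p‖ ^ 2 - C' ≤ (pencilNormSq (P p) (N p) w).re := by
  set a := 2 * ‖P 0‖ ^ 2 + 2 * ‖N 0‖ ^ 2
  set b := 4 * (K : ℝ) ^ 2
  set δ := min 1 (ε / (8 * (b + 1)))
  have hδ0 : 0 < δ := by positivity
  have hδε : 4 * δ * b ≤ ε / 2 := by
    have h : δ * (8 * (b + 1)) ≤ ε := (le_div_iff₀ (by positivity)).1 (min_le_right _ _)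
    nlinarith
  refine ⟨δ, ⟨hδ0, min_le_left _ _⟩, C + 4 * δ * a, fun w hw p ↦ ?_⟩
  have hab : ‖P p‖ ^ 2 + ‖N p‖ ^ 2 ≤ a + b * ‖p‖ ^ 2 := by
    linarith [norm_sq_le_of_lipschitzWith hPK p, norm_sq_le_of_lipschitzWith hNK p]
  calc ε / 2 * ‖p‖ ^ 2 - (C + 4 * δ * a)
      ≤ ε * ‖p‖ ^ 2 - C - (4 * δ * a + 4 * δ * b * ‖p‖ ^ 2) := by
        linarith [mul_le_mul_of_nonneg_right hδε (sq_nonneg ‖p‖)]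
    _ ≤ ‖P p‖ ^ 2 - ‖N p‖ ^ 2 - 4 * δ * (‖P p‖ ^ 2 + ‖N p‖ ^ 2) := by
        linarith [hPN p, mul_le_mul_of_nonneg_left hab (show 0 ≤ 4 * δ by positivity)]
    _ ≤ (pencilNormSq (P p) (N p) w).re := le_re_pencilNormSq _ _ (min_le_left _ _) hw

variable [FiniteDimensional ℝ V]

lemma pencilIntegrand_ofReal (hP : Differentiable ℝ P) (hN : Differentiable ℝ N) (t : ℝ) (p : V) :
    pencilIntegrand P N t p =
      (Real.exp (-‖(P + t • N) p‖ ^ 2) * (fderiv ℝ (P + t • N) p).det : ℝ) := by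
  rw [pencilIntegrand, pencilNormSq_ofReal, pencilDet_ofReal,
    fderiv_add (hP p) ((hN p).const_smul t), fderiv_const_smul (hN p)]
  push_cast
  rfl

lemma continuous_pencilIntegrand (hP : ContDiff ℝ 1 P) (hN : ContDiff ℝ 1 N) (w : ℂ) :
    Continuous (pencilIntegrand P N w) := by
  have hPc := hP.continuous
  have hNc := hN.continuous
  have hdet : Continuous fun p ↦ pencilDet (fderiv ℝ P p) (fderiv ℝ N p) w :=
    continuous_pencilDet.comp (f := fun p ↦ (fderiv ℝ P p, fderiv ℝ N p, w))
      ((hP.continuous_fderiv one_ne_zero).prodMk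
        ((hN.continuous_fderiv one_ne_zero).prodMk continuous_const))
  unfold pencilIntegrand pencilNormSq
  fun_prop

lemma differentiable_pencilIntegrand (p : V) : Differentiable ℂ (pencilIntegrand P N · p) := by
  have := differentiable_pencilDet (fderiv ℝ P p) (fderiv ℝ N p)
  unfold pencilIntegrand pencilNormSq
  fun_prop

variable [MeasurableSpace V] [BorelSpace V]

lemma integrable_exp_neg_mul_norm_sq {b : ℝ} (hb : 0 < b) :
    Integrable fun x : V ↦ Real.exp (-b * ‖x‖ ^ 2) := by
  refine .of_integral_ne_zero ?_
  rw [GaussianFourier.integral_rexp_neg_mul_sq_norm hb]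
  positivity

lemma integral_pencilIntegrand_ofReal (hP : Differentiable ℝ P) (hN : Differentiable ℝ N)
    (hPK : LipschitzWith K P) (hNK : LipschitzWith K N) (hmono : StronglyMonotone κ P) {t : ℝ}
    (ht : |t| * K < κ) :
    ∫ p, pencilIntegrand P N t p = (Real.pi ^ (Module.finrank ℝ V / 2 : ℝ) : ℝ) := by
  simp only [pencilIntegrand_ofReal hP hN]
  rw [integral_complex_ofReal, integral_exp_neg_norm_sq_mul_det_fderiv (hmono.add_smul hNK t)
    (hPK.add ((lipschitzWith_smul t).comp hNK)) (sub_pos.2 ht) (hP.add (hN.const_smul t))]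

lemma exists_differentiableOn_integral_pencilIntegrand (hP : ContDiff ℝ 1 P) (hN : ContDiff ℝ 1 N)
    (hPK : LipschitzWith K P) (hNK : LipschitzWith K N) (hε : 0 < ε)
    (hPN : ∀ p, ε * ‖p‖ ^ 2 - C ≤ ‖P p‖ ^ 2 - ‖N p‖ ^ 2) :
    ∃ δ > 0, DifferentiableOn ℂ (fun w ↦ ∫ p, pencilIntegrand P N w p) (pencilStrip δ) := by
  obtain ⟨δ, hδ, C', hC'⟩ := exists_le_re_pencilNormSq hPK hNK hε hPN
  obtain ⟨M, hM⟩ := exists_norm_pencilDet_le V (max K 3)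
  refine ⟨δ, hδ.1, differentiableOn_integral_of_dominated (isOpen_pencilStrip δ)
    (fun w ↦ (continuous_pencilIntegrand hP hN w).aestronglyMeasurable)
    (.of_forall fun p ↦ (differentiable_pencilIntegrand p).differentiableOn)
    ((integrable_exp_neg_mul_norm_sq (half_pos hε)).const_mul (Real.exp C' * M))
    (.of_forall fun p w hw ↦ ?_)⟩
  have hdet := hM (fderiv ℝ P p) (fderiv ℝ N p) w
    ((norm_fderiv_le_of_lipschitz ℝ hPK).trans (le_max_left _ _))
    ((norm_fderiv_le_of_lipschitz ℝ hNK).trans (le_max_left _ _))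
    ((norm_le_of_mem_pencilStrip hw).trans (le_max_of_le_right (by linarith [hδ.2])))
  calc ‖pencilIntegrand P N w p‖
      = Real.exp (-(pencilNormSq (P p) (N p) w).re) *
          ‖pencilDet (fderiv ℝ P p) (fderiv ℝ N p) w‖ := by
        rw [pencilIntegrand, norm_mul, Complex.norm_exp, Complex.neg_re]
    _ ≤ Real.exp (C' + -(ε / 2) * ‖p‖ ^ 2) * M := by
        gcongr
        linarith [hC' w hw p]
    _ = Real.exp C' * M * Real.exp (-(ε / 2) * ‖p‖ ^ 2) := by
        rw [Real.exp_add]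
        ring

/-- For small real `w` the map `P + w • N` is a diffeomorphism, so the integral is the Gaussian
one; being holomorphic in `w`, it keeps this value up to `w = i`. -/
theorem integral_pencilIntegrand_I (hP : ContDiff ℝ 1 P) (hN : ContDiff ℝ 1 N)
    (hPK : LipschitzWith K P) (hNK : LipschitzWith K N) (hκ : 0 < κ) (hmono : StronglyMonotone κ P)
    (hε : 0 < ε) (hPN : ∀ p, ε * ‖p‖ ^ 2 - C ≤ ‖P p‖ ^ 2 - ‖N p‖ ^ 2) :
    ∫ p, pencilIntegrand P N Complex.I p = (Real.pi ^ (Module.finrank ℝ V / 2 : ℝ) : ℝ) := by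
  obtain ⟨δ, hδ, hdiff⟩ := exists_differentiableOn_integral_pencilIntegrand hP hN hPK hNK hε hPN
  have h0 : (0 : ℂ) ∈ pencilStrip δ := by
    refine ⟨?_, ?_⟩ <;> constructor <;> simp <;> linarith
  have hI : Complex.I ∈ pencilStrip δ := by
    refine ⟨?_, ?_⟩ <;> constructor <;> simp <;> linarith
  refine (hdiff.analyticOnNhd (isOpen_pencilStrip δ)).eqOn_of_preconnected_of_frequently_eq
    analyticOnNhd_const (isPreconnected_pencilStrip δ) h0 ?_ hI
  have hsmall : ∀ᶠ t : ℝ in 𝓝[≠] 0, |t| * K < κ := by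
    have : Continuous fun t : ℝ ↦ |t| * K := by fun_prop
    exact eventually_nhdsWithin_of_eventually_nhds
      (this.tendsto 0 |>.eventually_lt_const (by simpa using hκ))
  have htend : Tendsto ((↑) : ℝ → ℂ) (𝓝[≠] 0) (𝓝[≠] 0) :=
    Complex.continuous_ofReal.continuousWithinAt.tendsto_nhdsWithin
      fun t ht ↦ Complex.ofReal_ne_zero.2 ht
  refine htend.frequently (hsmall.mono fun t ht ↦ ?_).frequently
  exact integral_pencilIntegrand_ofReal (hP.differentiable one_ne_zero)
    (hN.differentiable one_ne_zero) hPK hNK hmono ht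

end AnalyticContinuation

section MonotonePencil

variable {V : Type*} [NormedAddCommGroup V] [InnerProductSpace ℝ V] {T : V → V} {ε κ : ℝ}
  {K : NNReal}

lemma StronglyMonotone.le_inner_self (hT : StronglyMonotone ε T) (hε : 0 < ε) (x : V) :
    ε / 2 * ‖x‖ ^ 2 - ‖T 0‖ ^ 2 / (2 * ε) ≤ ⟪T x, x⟫ := by
  have hx := hT x 0
  rw [sub_zero, inner_sub_left] at hx
  have hcs : -(‖T 0‖ * ‖x‖) ≤ ⟪T 0, x⟫ := neg_le_of_abs_le (abs_real_inner_le_norm _ _)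
  have hamgm : ‖T 0‖ * ‖x‖ ≤ ε / 2 * ‖x‖ ^ 2 + ‖T 0‖ ^ 2 / (2 * ε) := by
    have hsq : ε / 2 * ‖x‖ ^ 2 + ‖T 0‖ ^ 2 / (2 * ε) - ‖T 0‖ * ‖x‖ =
        (ε * ‖x‖ - ‖T 0‖) ^ 2 / (2 * ε) := by
      field_simp
      ring
    exact sub_nonneg.1 (hsq ▸ by positivity)
  linarith

lemma StronglyMonotone.half_smul_id_add (hT : StronglyMonotone κ T) :
    StronglyMonotone ((1 + κ) / 2) ((1 / 2 : ℝ) • (id + T)) := by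
  intro x y
  simp only [Pi.add_apply, Pi.smul_apply, id]
  rw [← smul_sub, add_sub_add_comm, real_inner_smul_left, inner_add_left,
    real_inner_self_eq_norm_sq]
  linarith [hT x y]

lemma norm_sq_half_smul_add_sub_norm_sq_half_smul_sub (x y : V) :
    ‖(1 / 2 : ℝ) • (x + y)‖ ^ 2 - ‖(1 / 2 : ℝ) • (y - x)‖ ^ 2 = ⟪y, x⟫ := by
  rw [norm_smul, norm_smul, mul_pow, mul_pow, norm_add_sq_real, norm_sub_sq_real,
    real_inner_comm y x]
  norm_num
  ring

lemma enorm_pencilIntegrand_I (P N : V → V) (p : V) :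
    ‖pencilIntegrand P N Complex.I p‖ₑ = ENNReal.ofReal (Real.exp (-(‖P p‖ ^ 2 - ‖N p‖ ^ 2))) *
      ‖pencilDet (fderiv ℝ P p) (fderiv ℝ N p) Complex.I‖ₑ := by
  rw [pencilIntegrand, enorm_mul, ← ofReal_norm, Complex.norm_exp, Complex.neg_re, re_pencilNormSq]
  simp

variable [FiniteDimensional ℝ V]

/-- At `w = i` the Gaussian weight of the pencil `(id + T) / 2 + w • J ∘ (T - id) / 2` has
exponent `-⟪T p, p⟫`, by polarization. -/
lemma StronglyMonotone.pi_rpow_le_lintegral [MeasurableSpace V] [BorelSpace V]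
    (hT : StronglyMonotone ε T) (hε : 0 < ε) (hT' : ContDiff ℝ 1 T) (hTK : LipschitzWith K T)
    (J : V →ₗᵢ[ℝ] V) :
    ENNReal.ofReal (Real.pi ^ (Module.finrank ℝ V / 2 : ℝ)) ≤
      ∫⁻ p, ENNReal.ofReal (Real.exp (-⟪T p, p⟫)) *
        ‖pencilDet ((1 / 2 : ℝ) • (.id ℝ V + fderiv ℝ T p))
          (J.toContinuousLinearMap ∘L ((1 / 2 : ℝ) • (fderiv ℝ T p - .id ℝ V))) Complex.I‖ₑ := by
  let P : V → V := (1 / 2 : ℝ) • (id + T)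
  let N : V → V := J ∘ ((1 / 2 : ℝ) • (T - id))
  have hPN (p : V) : ‖P p‖ ^ 2 - ‖N p‖ ^ 2 = ⟪T p, p⟫ := by
    rw [← norm_sq_half_smul_add_sub_norm_sq_half_smul_sub]
    exact congr_arg _ (congr_arg (· ^ 2) (J.norm_map _))
  have hPK : LipschitzWith (‖(1 / 2 : ℝ)‖₊ * (1 + K)) P :=
    (lipschitzWith_smul _).comp (LipschitzWith.id.add hTK)
  have hNK : LipschitzWith (‖(1 / 2 : ℝ)‖₊ * (1 + K)) N := by
    rw [add_comm 1 K, ← one_mul (_ * _)]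
    exact J.lipschitz.comp ((lipschitzWith_smul _).comp (hTK.sub .id))
  have hgrowth (p : V) : ε / 2 * ‖p‖ ^ 2 - ‖T 0‖ ^ 2 / (2 * ε) ≤ ‖P p‖ ^ 2 - ‖N p‖ ^ 2 :=
    hPN p ▸ hT.le_inner_self hε p
  have hT'' (p : V) : HasFDerivAt T (fderiv ℝ T p) p :=
    (hT'.differentiable one_ne_zero p).hasFDerivAt
  have hP' (p : V) : fderiv ℝ P p = (1 / 2 : ℝ) • (.id ℝ V + fderiv ℝ T p) :=
    (((hasFDerivAt_id p).add (hT'' p)).const_smul (1 / 2 : ℝ)).fderiv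
  have hN' (p : V) : fderiv ℝ N p =
      J.toContinuousLinearMap ∘L ((1 / 2 : ℝ) • (fderiv ℝ T p - .id ℝ V)) :=
    (J.toContinuousLinearMap.hasFDerivAt.comp p
      (((hT'' p).sub (hasFDerivAt_id p)).const_smul (1 / 2 : ℝ))).fderiv
  have hint := integral_pencilIntegrand_I (P := P) (N := N) ((contDiff_id.add hT').const_smul _)
    (J.toContinuousLinearMap.contDiff.comp ((hT'.sub contDiff_id).const_smul _)) hPK hNK
    (show 0 < (1 + ε) / 2 by positivity) hT.half_smul_id_add (half_pos hε) hgrowth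
  calc ENNReal.ofReal (Real.pi ^ (Module.finrank ℝ V / 2 : ℝ))
      = ‖∫ p, pencilIntegrand P N Complex.I p‖ₑ := by
        rw [hint, ← ofReal_norm, Complex.norm_of_nonneg (by positivity)]
    _ ≤ ∫⁻ p, ‖pencilIntegrand P N Complex.I p‖ₑ := enorm_integral_le_lintegral_enorm _
    _ = _ := by simp only [enorm_pencilIntegrand_I, hPN, hP', hN']

end MonotonePencil

section ProductPencil

open WithLp

variable {E : Type*} [NormedAddCommGroup E] [InnerProductSpace ℝ E] {T : E → E} {ε : ℝ}
  {K : NNReal}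

/-- The quarter turn `(x, y) ↦ (y, -x)` of the Euclidean square of `E`. -/
def quarterTurn (E : Type*) [NormedAddCommGroup E] [InnerProductSpace ℝ E] :
    WithLp 2 (E × E) →ₗᵢ[ℝ] WithLp 2 (E × E) where
  toLinearMap := (WithLp.linearEquiv 2 ℝ (E × E)).symm.toLinearMap ∘ₗ
    ((LinearMap.snd ℝ E E).prod (-LinearMap.fst ℝ E E)) ∘ₗ
      (WithLp.linearEquiv 2 ℝ (E × E)).toLinearMap
  norm_map' p := by
    rw [← sq_eq_sq₀ (norm_nonneg _) (norm_nonneg _), prod_norm_sq_eq_of_L2, prod_norm_sq_eq_of_L2,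
      add_comm (‖p.fst‖ ^ 2), ← norm_neg p.fst]
    rfl

/-- The vector field `(x, y) ↦ (T x, T y)` on the Euclidean square of `E`. -/
def diagField (T : E → E) (p : WithLp 2 (E × E)) : WithLp 2 (E × E) := toLp 2 (T p.fst, T p.snd)

/-- The endomorphism `(x, y) ↦ (A x, B y)` of the Euclidean square of `E`. -/
def diagMap (A B : E →L[ℝ] E) : WithLp 2 (E × E) →L[ℝ] WithLp 2 (E × E) :=
  (prodContinuousLinearEquiv 2 ℝ E E).symm ∘L (A.prodMap B) ∘L
    (prodContinuousLinearEquiv 2 ℝ E E : WithLp 2 (E × E) →L[ℝ] E × E)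

lemma StronglyMonotone.diagField (hT : StronglyMonotone ε T) :
    StronglyMonotone ε (diagField T) := by
  intro p q
  rw [prod_norm_sq_eq_of_L2, prod_inner_apply]
  exact (mul_add _ _ _).trans_le (add_le_add (hT _ _) (hT _ _))

lemma lipschitzWith_diagField {E : Type*} [SeminormedAddCommGroup E] {T : E → E} {K : NNReal}
    (hTK : LipschitzWith K T) : LipschitzWith K (diagField T) := by
  refine .of_dist_le_mul fun p q ↦ ?_
  rw [dist_eq_norm, dist_eq_norm, ← abs_norm, ← abs_of_nonneg (by positivity : 0 ≤ K * ‖p - q‖),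
    ← sq_le_sq, mul_pow, prod_norm_sq_eq_of_L2, prod_norm_sq_eq_of_L2, mul_add, ← mul_pow,
    ← mul_pow]
  gcongr
  · exact hTK.norm_sub_le p.fst q.fst
  · exact hTK.norm_sub_le p.snd q.snd

lemma contDiff_diagField (hT : ContDiff ℝ 1 T) : ContDiff ℝ 1 (diagField T) :=
  (prodContinuousLinearEquiv 2 ℝ E E).symm.contDiff.comp
    ((hT.prodMap hT).comp (prodContinuousLinearEquiv 2 ℝ E E).contDiff)

lemma fderiv_diagField (hT : Differentiable ℝ T) (p : WithLp 2 (E × E)) :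
    fderiv ℝ (diagField T) p = diagMap (fderiv ℝ T p.fst) (fderiv ℝ T p.snd) :=
  ((prodContinuousLinearEquiv 2 ℝ E E).symm.hasFDerivAt.comp p
    (((hT p.fst).hasFDerivAt.prodMap p.ofLp (hT p.snd).hasFDerivAt).comp p
      (prodContinuousLinearEquiv 2 ℝ E E).hasFDerivAt)).fderiv

lemma det_fromBlocks_I_smul {ι : Type*} [Fintype ι] [DecidableEq ι] (A B : Matrix ι ι ℂ) :
    (Matrix.fromBlocks (1 + A) (Complex.I • B) (-Complex.I • A) (1 + B)).det = (1 + A + B).det := by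
  have hmul : Matrix.fromBlocks (1 + A) (Complex.I • B) (-Complex.I • A) (1 + B) =
      Matrix.fromBlocks 1 (Complex.I • 1) 0 1 *
        Matrix.fromBlocks 1 (-Complex.I • 1) (-Complex.I • A) (1 + B) := by
    simp [Matrix.fromBlocks_multiply, smul_smul]
  rw [hmul, Matrix.det_mul, Matrix.det_fromBlocks_zero₂₁, Matrix.det_fromBlocks_one₁₁]
  simp [smul_smul, add_right_comm]

/-- The basis `b ⊕ b` of the Euclidean square of `E`. -/
def squareBasis {ι : Type*} (b : Module.Basis ι ℝ E) : Module.Basis (ι ⊕ ι) ℝ (WithLp 2 (E × E)) :=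
  (b.prod b).map (prodContinuousLinearEquiv 2 ℝ E E).symm.toLinearEquiv

section Matrix
variable {ι : Type*} [Fintype ι] [DecidableEq ι] (b : Module.Basis ι ℝ E)

lemma toMatrix_diagMap (A B : E →L[ℝ] E) :
    LinearMap.toMatrix (squareBasis b) (squareBasis b) (diagMap A B : _ →ₗ[ℝ] _) =
      .fromBlocks (LinearMap.toMatrix b b A) 0 0 (LinearMap.toMatrix b b B) := by
  ext (i | i) (j | j) <;> simp [LinearMap.toMatrix_apply, squareBasis, diagMap]

lemma toMatrix_quarterTurn :
    LinearMap.toMatrix (squareBasis b) (squareBasis b) (quarterTurn E).toLinearMap =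
      .fromBlocks 0 1 (-1) 0 := by
  ext (i | i) (j | j) <;>
    simp [LinearMap.toMatrix_apply, squareBasis, quarterTurn, Matrix.one_apply,
      Finsupp.single_apply, eq_comm]

lemma toMatrix_half_smul_id_add_diagMap (A B : E →L[ℝ] E) :
    LinearMap.toMatrix (squareBasis b) (squareBasis b)
        (((1 / 2 : ℝ) • (.id ℝ (WithLp 2 (E × E)) + diagMap A B) :) : _ →ₗ[ℝ] _) =
      .fromBlocks (1 + (1 / 2 : ℝ) • (LinearMap.toMatrix b b A - 1)) 0 0
        (1 + (1 / 2 : ℝ) • (LinearMap.toMatrix b b B - 1)) := by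
  have hhalf (a : Matrix ι ι ℝ) : (1 / 2 : ℝ) • (1 + a) = 1 + (1 / 2 : ℝ) • (a - 1) := by module
  rw [ContinuousLinearMap.toLinearMap_smul, ContinuousLinearMap.toLinearMap_add, map_smul,
    map_add, toMatrix_diagMap, ContinuousLinearMap.coe_id, LinearMap.toMatrix_id,
    ← Matrix.fromBlocks_one, Matrix.fromBlocks_add, Matrix.fromBlocks_smul, hhalf, hhalf,
    add_zero, smul_zero]

lemma toMatrix_quarterTurn_comp_half_smul_diagMap_sub (A B : E →L[ℝ] E) :
    LinearMap.toMatrix (squareBasis b) (squareBasis b)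
        (((quarterTurn E).toContinuousLinearMap ∘L
          ((1 / 2 : ℝ) • (diagMap A B - .id ℝ _)) :) : _ →ₗ[ℝ] _) =
      .fromBlocks 0 ((1 / 2 : ℝ) • (LinearMap.toMatrix b b B - 1))
        (-((1 / 2 : ℝ) • (LinearMap.toMatrix b b A - 1))) 0 := by
  rw [ContinuousLinearMap.toLinearMap_comp, LinearMap.toMatrix_comp _ (squareBasis b) _,
    ContinuousLinearMap.toLinearMap_smul, ContinuousLinearMap.toLinearMap_sub, map_smul, map_sub,
    toMatrix_diagMap, ContinuousLinearMap.coe_id, LinearMap.toMatrix_id,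
    LinearIsometry.toLinearMap_toContinuousLinearMap, toMatrix_quarterTurn,
    ← Matrix.fromBlocks_one, sub_eq_add_neg, Matrix.fromBlocks_neg, Matrix.fromBlocks_add,
    Matrix.fromBlocks_smul, Matrix.fromBlocks_multiply]
  simp only [neg_zero, add_zero, zero_add, smul_zero, zero_mul, mul_zero, one_mul, neg_mul,
    ← sub_eq_add_neg]

end Matrix

lemma pencilDet_diagMap [FiniteDimensional ℝ E] (A B : E →L[ℝ] E) :
    pencilDet ((1 / 2 : ℝ) • (.id ℝ _ + diagMap A B))
      ((quarterTurn E).toContinuousLinearMap ∘L ((1 / 2 : ℝ) • (diagMap A B - .id ℝ _)))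
        Complex.I = ((1 / 2) ^ Module.finrank ℝ E * (A + B).det : ℝ) := by
  let b := Module.finBasis ℝ E
  let a := (1 / 2 : ℝ) • (LinearMap.toMatrix b b A - 1)
  let c := (1 / 2 : ℝ) • (LinearMap.toMatrix b b B - 1)
  let φ : ℝ →+* ℂ := algebraMap ℝ ℂ
  have hblocks : (Matrix.fromBlocks (1 + a) 0 0 (1 + c)).map φ +
      Complex.I • (Matrix.fromBlocks 0 c (-a) 0).map φ =
        .fromBlocks (1 + φ.mapMatrix a) (Complex.I • φ.mapMatrix c) (-Complex.I • φ.mapMatrix a)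
          (1 + φ.mapMatrix c) := by
    simp [Matrix.fromBlocks_map, Matrix.fromBlocks_smul, Matrix.fromBlocks_add,
      Matrix.map_add, Matrix.map_neg]
  have hsum : 1 + a + c = (1 / 2 : ℝ) • LinearMap.toMatrix b b (A + B : E →L[ℝ] E) := by
    rw [ContinuousLinearMap.toLinearMap_add, map_add]
    module
  rw [pencilDet_eq_det_toMatrix (squareBasis b), toMatrix_half_smul_id_add_diagMap,
    toMatrix_quarterTurn_comp_half_smul_diagMap_sub, hblocks, det_fromBlocks_I_smul,
    ← map_one φ.mapMatrix, ← map_add, ← map_add, ← RingHom.map_det, hsum, Matrix.det_smul,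
    LinearMap.det_toMatrix, Fintype.card_fin]
  rfl

variable [FiniteDimensional ℝ E] [MeasurableSpace E] [BorelSpace E]

lemma StronglyMonotone.two_pi_pow_le_lintegral (hT : StronglyMonotone ε T) (hε : 0 < ε)
    (hT' : ContDiff ℝ 1 T) (hTK : LipschitzWith K T) :
    ENNReal.ofReal ((2 * Real.pi) ^ Module.finrank ℝ E) ≤
      ∫⁻ p : E × E, ENNReal.ofReal |(fderiv ℝ T p.1 + fderiv ℝ T p.2).det| *
        ENNReal.ofReal (Real.exp (-(⟪T p.1, p.1⟫ + ⟪T p.2, p.2⟫))) := by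
  set n := Module.finrank ℝ E with hn
  have hrank : Module.finrank ℝ (WithLp 2 (E × E)) = n + n := by
    rw [← Module.finrank_prod]
    exact (WithLp.linearEquiv 2 ℝ (E × E)).finrank_eq
  have hpi := hT.diagField.pi_rpow_le_lintegral hε (contDiff_diagField hT')
    (lipschitzWith_diagField hTK) (quarterTurn E)
  rw [hrank, Nat.cast_add, add_self_div_two, Real.rpow_natCast] at hpi
  calc ENNReal.ofReal ((2 * Real.pi) ^ n)
      = ENNReal.ofReal (2 ^ n) * ENNReal.ofReal (Real.pi ^ n) := by
        rw [mul_pow, ENNReal.ofReal_mul (by positivity)]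
    _ ≤ ENNReal.ofReal (2 ^ n) * _ := mul_le_mul_right hpi _
    _ = ∫⁻ q : WithLp 2 (E × E), ENNReal.ofReal |(fderiv ℝ T q.fst + fderiv ℝ T q.snd).det| *
          ENNReal.ofReal (Real.exp (-(⟪T q.fst, q.fst⟫ + ⟪T q.snd, q.snd⟫))) := by
        rw [← lintegral_const_mul' _ _ ENNReal.ofReal_ne_top]
        refine lintegral_congr fun q ↦ ?_
        rw [fderiv_diagField (hT'.differentiable one_ne_zero), pencilDet_diagMap, ← hn,
          ← ofReal_norm, Complex.norm_real, Real.norm_eq_abs, abs_mul, abs_of_pos (by positivity),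
          mul_left_comm, ← ENNReal.ofReal_mul (by positivity), ← mul_assoc, ← mul_pow, mul_comm]
        norm_num
        rfl
    _ = _ := (WithLp.volume_preserving_toLp E E).lintegral_comp_emb
        (MeasurableEquiv.toLp 2 (E × E)).measurableEmbedding _ |>.symm

end ProductPencil

section SumDifference

variable {E : Type*} [NormedAddCommGroup E] [InnerProductSpace ℝ E] {T : E → E} {ε : ℝ}

lemma StronglyMonotone.injective_add_sub (hT : StronglyMonotone ε T) (hε : 0 < ε) :
    Function.Injective fun p : E × E ↦ (p.1 + p.2, T p.1 - T p.2) := by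
  rintro ⟨x, x'⟩ ⟨z, z'⟩ h
  obtain ⟨hsum, hdiff⟩ := Prod.mk.inj h
  have hneg : x' - z' = -(x - z) := by
    rw [neg_sub, sub_eq_sub_iff_add_eq_add, add_comm, hsum, add_comm]
  have heq : T x - T z = T x' - T z' := by
    rw [sub_eq_sub_iff_add_eq_add, sub_eq_sub_iff_add_eq_add.1 hdiff, add_comm]
  have hx := hT x z
  have hx' := hT x' z'
  rw [hneg, norm_neg, inner_neg_right, ← heq] at hx'
  have hxz : x - z = 0 := by
    have : ε * ‖x - z‖ ^ 2 ≤ 0 := by linarith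
    exact norm_eq_zero.1 (sq_eq_zero_iff.1 (le_antisymm (nonpos_of_mul_nonpos_right this hε)
      (sq_nonneg _)))
  rw [hxz, neg_zero] at hneg
  exact Prod.ext (sub_eq_zero.1 hxz) (sub_eq_zero.1 hneg)

variable [FiniteDimensional ℝ E]

lemma abs_det_prod_add_sub (A B : E →L[ℝ] E) :
    |((ContinuousLinearMap.fst ℝ E E + ContinuousLinearMap.snd ℝ E E).prod
      (A ∘L ContinuousLinearMap.fst ℝ E E - B ∘L ContinuousLinearMap.snd ℝ E E)).det| =
        |(A + B).det| := by
  let b := Module.finBasis ℝ E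
  set L := (ContinuousLinearMap.fst ℝ E E + ContinuousLinearMap.snd ℝ E E).prod
    (A ∘L ContinuousLinearMap.fst ℝ E E - B ∘L ContinuousLinearMap.snd ℝ E E)
  have hL : LinearMap.toMatrix (b.prod b) (b.prod b) L =
      .fromBlocks 1 1 (LinearMap.toMatrix b b A) (-LinearMap.toMatrix b b B) := by
    ext (i | i) (j | j) <;>
      simp [L, LinearMap.toMatrix_apply, Matrix.one_apply, Finsupp.single_apply, eq_comm]
  rw [ContinuousLinearMap.det, ← LinearMap.det_toMatrix (b.prod b), hL,
    Matrix.det_fromBlocks_one₁₁, mul_one, ← neg_add', Matrix.det_neg, abs_mul, abs_neg_one_pow,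
    one_mul, add_comm, ← map_add, LinearMap.det_toMatrix]
  rfl

lemma StronglyMonotone.lintegral_abs_det_mul_le [MeasurableSpace E] [BorelSpace E]
    (hT : StronglyMonotone ε T) (hε : 0 < ε) (hT' : Differentiable ℝ T) (f : E × E → ℝ≥0∞) :
    ∫⁻ p : E × E, ENNReal.ofReal |(fderiv ℝ T p.1 + fderiv ℝ T p.2).det| *
      f (p.1 + p.2, T p.1 - T p.2) ≤ ∫⁻ q, f q := by
  have hderiv (p : E × E) := (hasFDerivAt_fst.add hasFDerivAt_snd).prodMk
    (((hT' p.1).hasFDerivAt.comp p hasFDerivAt_fst).sub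
      ((hT' p.2).hasFDerivAt.comp p hasFDerivAt_snd))
  have hcov := lintegral_image_eq_lintegral_abs_det_fderiv_mul
    ((volume : Measure E).prod volume) .univ
    (fun p _ ↦ (hderiv p).hasFDerivWithinAt) (hT.injective_add_sub hε).injOn f
  simp only [abs_det_prod_add_sub, setLIntegral_univ] at hcov
  exact hcov.symm.trans_le (setLIntegral_le_lintegral _ _)

end SumDifference

section Softmax

variable {ι E : Type*} [Fintype ι] [NormedAddCommGroup E] [InnerProductSpace ℝ E] (y : ι → E)

/-- The smooth maximum `log ∑ exp ⟪y i, x⟫` of the linear functionals `⟪y i, ·⟫`. -/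
def logSumExp (x : E) : ℝ := Real.log (∑ i, Real.exp ⟪y i, x⟫)

/-- The Gibbs weights `exp ⟪y i, x⟫ / ∑ j, exp ⟪y j, x⟫`. -/
def softmax (x : E) (i : ι) : ℝ := Real.exp (⟪y i, x⟫ - logSumExp y x)

/-- The barycenter of the points `y i` with the weights `softmax y x`; it is the gradient of
`logSumExp y` at `x`. -/
def softmaxMean (x : E) : E := ∑ i, softmax y x i • y i

lemma softmax_pos (x : E) (i : ι) : 0 < softmax y x i := Real.exp_pos _

lemma inner_softmaxMean (x v : E) : ⟪softmaxMean y x, v⟫ = ∑ i, softmax y x i * ⟪y i, v⟫ := by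
  simp only [softmaxMean, sum_inner, real_inner_smul_left]

variable [Nonempty ι]

lemma sum_exp_inner_pos (x : E) : 0 < ∑ i, Real.exp ⟪y i, x⟫ :=
  Finset.sum_pos (fun _ _ ↦ Real.exp_pos _) Finset.univ_nonempty

lemma sum_softmax (x : E) : ∑ i, softmax y x i = 1 := by
  simp only [softmax, Real.exp_sub, logSumExp, Real.exp_log (sum_exp_inner_pos y x)]
  rw [← Finset.sum_div, div_self (sum_exp_inner_pos y x).ne']

lemma inner_le_logSumExp (x : E) (j : ι) : ⟪y j, x⟫ ≤ logSumExp y x := by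
  rw [logSumExp, Real.le_log_iff_exp_le (sum_exp_inner_pos y x)]
  exact Finset.single_le_sum (f := fun i ↦ Real.exp ⟪y i, x⟫) (fun _ _ ↦ (Real.exp_pos _).le)
    (Finset.mem_univ j)

variable {y} in
lemma softmaxMean_mem {s : Set E} (hs : Convex ℝ s) (hy : ∀ i, y i ∈ s) (x : E) :
    softmaxMean y x ∈ s :=
  hs.sum_mem (fun i _ ↦ (softmax_pos y x i).le) (sum_softmax y x) fun i _ ↦ hy i

/-- Centering by `logSumExp` turns each summand into `(exp a - exp b) * (a - b) ≥ 0`. -/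
lemma stronglyMonotone_softmaxMean : StronglyMonotone 0 (softmaxMean y) := by
  intro x z
  have hcenter : ∑ i, (softmax y x i - softmax y z i) * (logSumExp y x - logSumExp y z) = 0 := by
    rw [← Finset.sum_mul, Finset.sum_sub_distrib, sum_softmax, sum_softmax, sub_self, zero_mul]
  rw [zero_mul]
  calc (0 : ℝ) ≤ ∑ i, (softmax y x i - softmax y z i) *
        ((⟪y i, x⟫ - logSumExp y x) - (⟪y i, z⟫ - logSumExp y z)) :=
        Finset.sum_nonneg fun i _ ↦
          (Real.exp_monotone.monovary monotone_id).sub_mul_sub_nonneg _ _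
    _ = ∑ i, (softmax y x i - softmax y z i) * (⟪y i, x⟫ - ⟪y i, z⟫) := by
        rw [← sub_zero (∑ i, _ * (⟪y i, x⟫ - ⟪y i, z⟫)), ← hcenter, ← Finset.sum_sub_distrib]
        exact Finset.sum_congr rfl fun i _ ↦ by ring
    _ = ⟪softmaxMean y x - softmaxMean y z, x - z⟫ := by
        simp only [inner_sub_left, inner_softmaxMean, ← Finset.sum_sub_distrib, ← sub_mul,
          ← mul_sub, inner_sub_right]

/-- The weights have entropy `logSumExp y x - ⟪softmaxMean y x, x⟫`, which is at most the
logarithm of their number. -/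
lemma logSumExp_sub_log_card_le (x : E) :
    logSumExp y x - Real.log (Fintype.card ι) ≤ ⟪softmaxMean y x, x⟫ := by
  have hm : (0 : ℝ) < Fintype.card ι := Nat.cast_pos.2 Fintype.card_pos
  have hi (i : ι) : softmax y x i * (logSumExp y x - Real.log (Fintype.card ι)) +
      (softmax y x i - (Fintype.card ι : ℝ)⁻¹) ≤ softmax y x i * ⟪y i, x⟫ := by
    have hp := softmax_pos y x i
    have hlog := Real.one_sub_inv_le_log_of_pos (mul_pos hp hm)
    rw [Real.log_mul hp.ne' hm.ne', softmax, Real.log_exp, ← softmax] at hlog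
    have hmul := mul_le_mul_of_nonneg_left hlog hp.le
    have hcancel : softmax y x i * (1 - (softmax y x i * Fintype.card ι)⁻¹) =
        softmax y x i - (Fintype.card ι : ℝ)⁻¹ := by
      field_simp
    linarith
  have hsum := Finset.sum_le_sum fun i (_ : i ∈ Finset.univ) ↦ hi i
  rw [Finset.sum_add_distrib, ← Finset.sum_mul, Finset.sum_sub_distrib, sum_softmax,
    ← inner_softmaxMean, Finset.sum_const, Finset.card_univ, nsmul_eq_mul,
    mul_inv_cancel₀ hm.ne'] at hsum
  linarith

lemma hasFDerivAt_logSumExp (x : E) :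
    HasFDerivAt (logSumExp y) (innerSL ℝ (softmaxMean y x)) x := by
  have hsum : HasFDerivAt (fun x ↦ ∑ i, Real.exp ⟪y i, x⟫)
      (∑ i, Real.exp ⟪y i, x⟫ • innerSL ℝ (y i)) x :=
    .fun_sum fun i _ ↦ (innerSL ℝ (y i)).hasFDerivAt.exp
  refine (hsum.log (sum_exp_inner_pos y x).ne').congr_fderiv ?_
  simp only [softmaxMean, softmax, Real.exp_sub, logSumExp, Real.exp_log (sum_exp_inner_pos y x),
    map_sum, map_smul, Finset.smul_sum, smul_smul, div_eq_inv_mul]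

lemma hasFDerivAt_softmaxMean (x : E) :
    HasFDerivAt (softmaxMean y)
      (∑ i, (softmax y x i • innerSL ℝ (y i - softmaxMean y x)).smulRight (y i)) x := by
  refine .fun_sum fun i _ ↦ ?_
  rw [map_sub]
  exact ((innerSL ℝ (y i)).hasFDerivAt.sub (hasFDerivAt_logSumExp y x)).exp.smul_const (y i)

lemma contDiff_softmaxMean : ContDiff ℝ 1 (softmaxMean y) := by
  have hlse : ContDiff ℝ 1 (logSumExp y) :=
    (ContDiff.sum fun i _ ↦ (innerSL ℝ (y i)).contDiff.exp).log fun x ↦ (sum_exp_inner_pos y x).ne'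
  exact .sum fun i _ ↦ (((innerSL ℝ (y i)).contDiff.sub hlse).exp).smul contDiff_const

variable {y} in
lemma lipschitzWith_softmaxMean {R : NNReal} (hR : ∀ i, ‖y i‖ ≤ R) :
    LipschitzWith (2 * R ^ 2) (softmaxMean y) := by
  refine lipschitzWith_of_nnnorm_fderiv_le
    (fun x ↦ (hasFDerivAt_softmaxMean y x).differentiableAt) fun x ↦ ?_
  have hmean : ‖softmaxMean y x‖ ≤ R :=
    mem_closedBall_zero_iff.1 (softmaxMean_mem (convex_closedBall 0 _)
      (fun i ↦ mem_closedBall_zero_iff.2 (hR i)) x)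
  rw [(hasFDerivAt_softmaxMean y x).fderiv, ← NNReal.coe_le_coe, coe_nnnorm]
  calc ‖∑ i, (softmax y x i • innerSL ℝ (y i - softmaxMean y x)).smulRight (y i)‖
      ≤ ∑ i, softmax y x i * ((R + R) * R) := by
        refine norm_sum_le_of_le _ fun i _ ↦ ?_
        rw [ContinuousLinearMap.norm_smulRight_apply, norm_smul, innerSL_apply_norm,
          Real.norm_of_nonneg (softmax_pos y x i).le, mul_assoc]
        gcongr
        · exact (softmax_pos y x i).le
        · exact norm_sub_le_of_le (hR i) hmean
        · exact hR i
    _ = (2 * R ^ 2 : NNReal) := by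
        rw [← Finset.sum_mul, sum_softmax]
        push_cast
        ring

end Softmax

section Gauge

variable {d : ℕ} {D : Set (Euc d)}

namespace IsSymmConvexBody

lemma absorbent (hD : IsSymmConvexBody D) : Absorbent ℝ D := absorbent_nhds_zero hD.mem_nhds_zero

lemma continuous_gauge (hD : IsSymmConvexBody D) : Continuous (gauge D) :=
  _root_.continuous_gauge hD.convex hD.mem_nhds_zero

lemma volume_gauge_lt_one (hD : IsSymmConvexBody D) : volume {x | gauge D x < 1} = volume D := by
  rw [setOfPred_gauge_lt_one_eq_interior hD.convex hD.mem_nhds_zero]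
  exact measure_interior_of_null_frontier (hD.convex.addHaar_frontier volume)

lemma lintegral_exp_neg_gauge (hD : IsSymmConvexBody D) :
    ∫⁻ x, ENNReal.ofReal (Real.exp (-gauge D x)) =
      ENNReal.ofReal (d.factorial * (volume D).toReal) := by
  have hvol := measure_lt_one_eq_integral_div_gamma (volume : Measure (Euc d)) gauge_zero
    (gauge_neg fun _ ↦ hD.neg_mem) (gauge_add_le hD.convex hD.absorbent)
    (fun {_} ↦ (gauge_eq_zero hD.absorbent
      ((NormedSpace.isVonNBounded_iff ℝ).2 hD.isCompact.isBounded)).1)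
    (fun r x ↦ (gauge_smul ((balanced_iff_neg_mem hD.convex).2 fun _ ↦ hD.neg_mem) r x).le) one_pos
  simp only [Real.rpow_one, div_one, finrank_euclideanSpace_fin, Real.Gamma_nat_eq_factorial,
    hD.volume_gauge_lt_one] at hvol
  have hint : Integrable fun x ↦ Real.exp (-gauge D x) := by
    refine .of_integral_ne_zero fun h ↦ hD.isConvexBody.volume_ne_zero ?_
    rw [hvol, h, zero_div, ENNReal.ofReal_zero]
  rw [hvol, ENNReal.toReal_ofReal (by positivity), mul_div_cancel₀ _ (by positivity),
    ofReal_integral_eq_lintegral_ofReal hint (.of_forall fun x ↦ (Real.exp_pos _).le)]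

lemma lintegral_exp_neg_mul_gauge (hD : IsSymmConvexBody D) {a : ℝ} (ha : 0 < a) :
    ∫⁻ x, ENNReal.ofReal (Real.exp (-(a * gauge D x))) =
      ENNReal.ofReal (d.factorial * (a⁻¹ ^ d * (volume D).toReal)) := by
  rw [← volume_smul_toReal D (by positivity),
    ← (hD.smul (inv_ne_zero ha.ne')).lintegral_exp_neg_gauge,
    gauge_smul_left_of_nonneg (by positivity)]
  simp only [inv_inv, Pi.smul_apply, smul_eq_mul]

lemma lintegral_exp_neg_mul_gauge_prod {D' : Set (Euc d)} (hD : IsSymmConvexBody D)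
    (hD' : IsSymmConvexBody D') {a b : ℝ} (ha : 0 < a) (hb : 0 < b) :
    ∫⁻ q : Euc d × Euc d,
        ENNReal.ofReal (Real.exp (-(a * gauge D q.1)) * Real.exp (-(b * gauge D' q.2))) =
      ENNReal.ofReal (d.factorial * (a⁻¹ ^ d * (volume D).toReal) *
        (d.factorial * (b⁻¹ ^ d * (volume D').toReal))) := by
  have hexp {K : Set (Euc d)} (hK : IsSymmConvexBody K) (c : ℝ) :
      Measurable fun x ↦ ENNReal.ofReal (Real.exp (-(c * gauge K x))) := by
    have := hK.continuous_gauge.measurable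
    fun_prop
  simp only [ENNReal.ofReal_mul (Real.exp_pos _).le]
  rw [Measure.volume_eq_prod, lintegral_prod_mul (hexp hD a).aemeasurable
    (hexp hD' b).aemeasurable, hD.lintegral_exp_neg_mul_gauge ha,
    hD'.lintegral_exp_neg_mul_gauge hb, ← ENNReal.ofReal_mul (by positivity)]

lemma gauge_sub_le_two (hD : IsSymmConvexBody D) {x z : Euc d} (hx : x ∈ D) (hz : z ∈ D) :
    gauge D (x - z) ≤ 2 := by
  rw [sub_eq_add_neg]
  linarith [gauge_add_le hD.convex hD.absorbent x (-z), gauge_le_one_of_mem hx,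
    gauge_le_one_of_mem (hD.neg_mem hz)]

end IsSymmConvexBody

lemma gauge_le_inv_mul_norm {r : ℝ} (hr : 0 < r) (hrD : closedBall 0 r ⊆ D) (x : Euc d) :
    gauge D x ≤ r⁻¹ * ‖x‖ := by
  rw [le_inv_mul_iff₀ hr]
  exact mul_gauge_le_norm (ball_subset_closedBall.trans hrD)

lemma gauge_polarSet_le {ρ : ℝ} (hρ : 0 ≤ ρ) {x : Euc d} (hx : ∀ z ∈ D, ⟪z, x⟫ ≤ ρ) :
    gauge (polarSet D) x ≤ ρ := by
  refine le_of_forall_gt_imp_ge_of_dense fun a ha ↦ ?_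
  have ha0 : 0 < a := hρ.trans_lt ha
  exact gauge_le_of_mem ha0.le ((mem_smul_polarSet ha0).2 fun z hz ↦ (hx z hz).trans ha.le)

end Gauge

section HalfNet

variable {d : ℕ} {D : Set (Euc d)}

lemma IsSymmConvexBody.exists_half_net (hD : IsSymmConvexBody D) :
    ∃ s : Finset (Euc d), (∀ x ∈ s, x ∈ D) ∧ D ⊆ ⋃ x ∈ s, (x +ᵥ (1 / 2 : ℝ) • D) ∧
      s.card ≤ 5 ^ d := by
  obtain ⟨s, hsD, hs, hcard⟩ :=
    (hD.smul one_half_pos.ne').exists_finset_cover hD.isCompact.isBounded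
  refine ⟨s, hsD, hs, ?_⟩
  have hquarter : (1 / 2 : ℝ) • (1 / 2 : ℝ) • D = (1 / 4 : ℝ) • D := by
    rw [smul_smul]
    norm_num
  rw [hquarter, hD.add_smul_self (by norm_num)] at hcard
  have hreal := ENNReal.toReal_mono (hD.smul (by norm_num)).isConvexBody.volume_ne_top hcard
  rw [ENNReal.toReal_mul, ENNReal.toReal_natCast, volume_smul_toReal D (by norm_num),
    volume_smul_toReal D (by norm_num), ← mul_assoc] at hreal
  have hpow := le_of_mul_le_mul_right hreal hD.isConvexBody.volume_toReal_pos
  rw [show (1 + 1 / 4 : ℝ) = 5 * (1 / 4) by norm_num, mul_pow] at hpow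
  exact_mod_cast le_of_mul_le_mul_right hpow (by positivity)

variable {ι : Type*} {y : ι → Euc d}

lemma IsSymmConvexBody.exists_half_gauge_polarSet_le_inner (hD : IsSymmConvexBody D)
    (hy : D ⊆ ⋃ i, y i +ᵥ (1 / 2 : ℝ) • D) (x : Euc d) :
    ∃ i, gauge (polarSet D) x / 2 ≤ ⟪y i, x⟫ := by
  obtain ⟨z, hz, hmax⟩ := hD.isCompact.exists_isMaxOn ⟨0, hD.zero_mem⟩
    (f := fun z ↦ ⟪z, x⟫) (by fun_prop)
  have hgauge : gauge (polarSet D) x ≤ ⟪z, x⟫ :=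
    gauge_polarSet_le (by simpa using hmax hD.zero_mem) hmax
  obtain ⟨i, _, ⟨u, hu, rfl⟩, hzi⟩ := mem_iUnion.1 (hy hz)
  have hux : ⟪u, x⟫ ≤ ⟪z, x⟫ := hmax hu
  have hsplit : ⟪z, x⟫ = ⟪y i, x⟫ + 1 / 2 * ⟪u, x⟫ := by
    rw [← hzi, ← real_inner_smul_left, ← inner_add_left]
    rfl
  exact ⟨i, by linarith⟩

variable [Fintype ι] [Nonempty ι]

lemma IsSymmConvexBody.half_gauge_polarSet_sub_log_card_le (hD : IsSymmConvexBody D)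
    (hy : D ⊆ ⋃ i, y i +ᵥ (1 / 2 : ℝ) • D) (x : Euc d) :
    gauge (polarSet D) x / 2 - Real.log (Fintype.card ι) ≤ ⟪softmaxMean y x, x⟫ := by
  obtain ⟨i, hi⟩ := hD.exists_half_gauge_polarSet_le_inner hy x
  linarith [inner_le_logSumExp y x i, logSumExp_sub_log_card_le y x]

end HalfNet

section RegularizedSoftmax

variable {ι E : Type*} [Fintype ι] [NormedAddCommGroup E] [InnerProductSpace ℝ E]
  {y : ι → E} {ε : ℝ}

/-- The gradient `softmaxMean y x + ε • x` of the strongly convex function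
`logSumExp y x + ε / 2 * ‖x‖ ^ 2`. -/
def regSoftmaxMean (y : ι → E) (ε : ℝ) (x : E) : E := softmaxMean y x + ε • x

lemma regSoftmaxMean_sub (x z : E) :
    regSoftmaxMean y ε x - regSoftmaxMean y ε z =
      (softmaxMean y x - softmaxMean y z) + ε • (x - z) := by
  simp only [regSoftmaxMean]
  module

lemma inner_regSoftmaxMean_self (x : E) :
    ⟪regSoftmaxMean y ε x, x⟫ = ⟪softmaxMean y x, x⟫ + ε * ‖x‖ ^ 2 := by
  rw [regSoftmaxMean, inner_add_left, real_inner_smul_left, real_inner_self_eq_norm_sq]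

variable [Nonempty ι]

lemma stronglyMonotone_regSoftmaxMean : StronglyMonotone ε (regSoftmaxMean y ε) := by
  intro x z
  rw [regSoftmaxMean_sub, inner_add_left, real_inner_smul_left, real_inner_self_eq_norm_sq]
  linarith [stronglyMonotone_softmaxMean y x z]

lemma contDiff_regSoftmaxMean : ContDiff ℝ 1 (regSoftmaxMean y ε) :=
  (contDiff_softmaxMean y).add (contDiff_id.const_smul ε)

lemma exists_lipschitzWith_regSoftmaxMean : ∃ K, LipschitzWith K (regSoftmaxMean y ε) := by
  have hy (i : ι) : ‖y i‖ ≤ (∑ j, ‖y j‖₊ : NNReal) :=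
    Finset.single_le_sum (f := fun j ↦ ‖y j‖₊) (fun _ _ ↦ zero_le) (Finset.mem_univ i)
  exact ⟨_, (lipschitzWith_softmaxMean hy).add (lipschitzWith_smul ε)⟩

end RegularizedSoftmax

section BourgainMilman

variable {d : ℕ} {D : Set (Euc d)} {ι : Type*} [Fintype ι] [Nonempty ι] {y : ι → Euc d} {r ε : ℝ}

lemma mul_norm_sub_le_young {E : Type*} [NormedAddCommGroup E] [InnerProductSpace ℝ E] {b : ℝ}
    (hε : 0 ≤ ε) (hεb : ε * b ^ 2 ≤ 2) (x z : E) :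
    b * (ε * ‖x - z‖) ≤ ε * (‖x‖ ^ 2 + ‖z‖ ^ 2) + 1 := by
  have hpar := parallelogram_law_with_norm ℝ x z
  have hsq : ‖x - z‖ ^ 2 ≤ 2 * (‖x‖ ^ 2 + ‖z‖ ^ 2) := by nlinarith [sq_nonneg ‖x + z‖]
  nlinarith [mul_nonneg hε (sq_nonneg (‖x - z‖ - b)), mul_le_mul_of_nonneg_left hsq hε]

lemma IsSymmConvexBody.mul_gauge_regSoftmaxMean_sub_le (hD : IsSymmConvexBody D)
    (hyD : ∀ i, y i ∈ D) (hr : 0 < r) (hrD : closedBall 0 r ⊆ D) (hε : 0 ≤ ε)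
    (hεr : ε * (d * r⁻¹) ^ 2 ≤ 2) (x z : Euc d) :
    d * gauge D (regSoftmaxMean y ε x - regSoftmaxMean y ε z) ≤
      2 * d + (ε * (‖x‖ ^ 2 + ‖z‖ ^ 2) + 1) :=
  calc d * gauge D (regSoftmaxMean y ε x - regSoftmaxMean y ε z)
      ≤ d * (2 + r⁻¹ * (ε * ‖x - z‖)) := by
        have hball := gauge_le_inv_mul_norm hr hrD (ε • (x - z))
        rw [norm_smul, Real.norm_of_nonneg hε] at hball
        rw [regSoftmaxMean_sub]
        gcongr
        exact (gauge_add_le hD.convex hD.absorbent _ _).trans (add_le_add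
          (hD.gauge_sub_le_two (softmaxMean_mem hD.convex hyD x)
            (softmaxMean_mem hD.convex hyD z)) hball)
    _ = 2 * d + d * r⁻¹ * (ε * ‖x - z‖) := by ring
    _ ≤ 2 * d + (ε * (‖x‖ ^ 2 + ‖z‖ ^ 2) + 1) := by grw [mul_norm_sub_le_young hε hεr x z]

lemma IsSymmConvexBody.exp_neg_inner_regSoftmaxMean_le (hD : IsSymmConvexBody D)
    (hyD : ∀ i, y i ∈ D) (hy : D ⊆ ⋃ i, y i +ᵥ (1 / 2 : ℝ) • D) (hr : 0 < r)
    (hrD : closedBall 0 r ⊆ D) (hε : 0 ≤ ε) (hεr : ε * (d * r⁻¹) ^ 2 ≤ 2) (x z : Euc d) :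
    Real.exp (-(⟪regSoftmaxMean y ε x, x⟫ + ⟪regSoftmaxMean y ε z, z⟫)) ≤
      Fintype.card ι ^ 2 * Real.exp (2 * d + 1) *
        (Real.exp (-(1 / 2 * gauge (polarSet D) (x + z))) *
          Real.exp (-(d * gauge D (regSoftmaxMean y ε x - regSoftmaxMean y ε z)))) := by
  have hcard : (Fintype.card ι : ℝ) ^ 2 = Real.exp (2 * Real.log (Fintype.card ι)) := by
    rw [two_mul, Real.exp_add, Real.exp_log (Nat.cast_pos.2 Fintype.card_pos), sq]
  rw [hcard, ← Real.exp_add, ← Real.exp_add, ← Real.exp_add, Real.exp_le_exp,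
    inner_regSoftmaxMean_self, inner_regSoftmaxMean_self]
  linarith [hD.half_gauge_polarSet_sub_log_card_le hy x,
    hD.half_gauge_polarSet_sub_log_card_le hy z,
    gauge_add_le hD.polar.convex hD.polar.absorbent x z,
    hD.mul_gauge_regSoftmaxMean_sub_le hyD hr hrD hε hεr x z]

/-- The lower bound for the monotone map `regSoftmaxMean y ε` is transported by
`(x, z) ↦ (x + z, T x - T z)` to the product of the integrals of `exp (-gauge (polarSet D) / 2)`
and `exp (-d * gauge D)`. -/
lemma IsSymmConvexBody.two_pi_pow_le_of_half_net (hD : IsSymmConvexBody D) (hd : 1 ≤ d)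
    (hyD : ∀ i, y i ∈ D) (hy : D ⊆ ⋃ i, y i +ᵥ (1 / 2 : ℝ) • D) :
    (2 * Real.pi) ^ d ≤ Fintype.card ι ^ 2 * Real.exp (2 * d + 1) *
      (d.factorial * (2 ^ d * (volume (polarSet D)).toReal) *
        (d.factorial * ((d : ℝ)⁻¹ ^ d * (volume D).toReal))) := by
  obtain ⟨r, hr, hrD⟩ := hD.exists_closedBall_subset
  have hd' : (0 : ℝ) < d := by exact_mod_cast hd
  set ε : ℝ := 2 * (r / d) ^ 2 with hε_def
  have hε : 0 < ε := by positivity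
  have hεr : ε * (d * r⁻¹) ^ 2 ≤ 2 := le_of_eq (by rw [hε_def]; field_simp)
  obtain ⟨K, hK⟩ := exists_lipschitzWith_regSoftmaxMean (y := y) (ε := ε)
  have hmono := stronglyMonotone_regSoftmaxMean (y := y) (ε := ε)
  have hsmooth := contDiff_regSoftmaxMean (y := y) (ε := ε)
  set Q : ℝ := Fintype.card ι ^ 2 * Real.exp (2 * d + 1)
  let f (q : Euc d × Euc d) : ℝ≥0∞ := ENNReal.ofReal (Q *
    (Real.exp (-(1 / 2 * gauge (polarSet D) q.1)) * Real.exp (-(d * gauge D q.2))))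
  have hpointwise (p : Euc d × Euc d) :
      ENNReal.ofReal (Real.exp
        (-(⟪regSoftmaxMean y ε p.1, p.1⟫ + ⟪regSoftmaxMean y ε p.2, p.2⟫))) ≤
        f (p.1 + p.2, regSoftmaxMean y ε p.1 - regSoftmaxMean y ε p.2) :=
    ENNReal.ofReal_le_ofReal
      (hD.exp_neg_inner_regSoftmaxMean_le hyD hy hr hrD hε.le hεr p.1 p.2)
  have hf : ∫⁻ q, f q = ENNReal.ofReal (Q *
      (d.factorial * (2 ^ d * (volume (polarSet D)).toReal) *
        (d.factorial * ((d : ℝ)⁻¹ ^ d * (volume D).toReal)))) := by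
    simp only [f, ENNReal.ofReal_mul (show 0 ≤ Q by positivity)]
    rw [lintegral_const_mul' _ _ ENNReal.ofReal_ne_top,
      hD.polar.lintegral_exp_neg_mul_gauge_prod hD one_half_pos hd', one_div, inv_inv]
  refine (ENNReal.ofReal_le_ofReal_iff (by positivity)).1 ?_
  rw [← hf]
  have hlower := hmono.two_pi_pow_le_lintegral hε hsmooth hK
  rw [finrank_euclideanSpace_fin] at hlower
  exact hlower.trans ((lintegral_mono fun p ↦ mul_le_mul_right (hpointwise p) _).trans
    (hmono.lintegral_abs_det_mul_le hε (hsmooth.differentiable one_ne_zero) f))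

/-- A form of the Bourgain–Milman inequality. -/
lemma IsSymmConvexBody.one_le_pow_mul_mahlerVolume (hD : IsSymmConvexBody D) (hd : 1 ≤ d) :
    1 ≤ (50 * Real.exp 3) ^ d * (d ^ d * mahlerVolume D) := by
  obtain ⟨s, hsD, hs, hcard⟩ := hD.exists_half_net
  have hs' : D ⊆ ⋃ x : s, (x : Euc d) +ᵥ (1 / 2 : ℝ) • D := by
    rwa [iUnion_subtype]
  obtain ⟨x, -⟩ := mem_iUnion.1 (hs' hD.zero_mem)
  have : Nonempty s := ⟨x⟩
  have hnet := hD.two_pi_pow_le_of_half_net hd (fun x : s ↦ hsD x x.2) hs'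
  rw [Fintype.card_coe] at hnet
  have hfact : (d.factorial : ℝ) ≤ d ^ d := by exact_mod_cast d.factorial_le_pow
  have hcard' : (s.card : ℝ) ≤ 5 ^ d := by exact_mod_cast hcard
  have hd' : (1 : ℝ) ≤ d := by exact_mod_cast hd
  have hexp : Real.exp (2 * d + 1) ≤ Real.exp 3 ^ d := by
    rw [← Real.exp_nat_mul, Real.exp_le_exp]
    linarith
  calc (1 : ℝ) ≤ (2 * Real.pi) ^ d := one_le_pow₀ (by linarith [Real.pi_gt_three])
    _ ≤ _ := hnet
    _ ≤ (5 ^ d) ^ 2 * Real.exp 3 ^ d * (d ^ d * (2 ^ d * (volume (polarSet D)).toReal) *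
          (d ^ d * ((d : ℝ)⁻¹ ^ d * (volume D).toReal))) := by gcongr
    _ = (50 * Real.exp 3) ^ d * (d ^ d * mahlerVolume D) := by
        rw [mahlerVolume, show (50 : ℝ) = 5 ^ 2 * 2 by norm_num, mul_pow, mul_pow,
          pow_right_comm, inv_pow]
        field_simp

end BourgainMilman

section CoveringBounds

variable {d : ℕ} {D E : Set (Euc d)}

lemma IsSymmConvexBody.mahlerVolume_pos (hD : IsSymmConvexBody D) : 0 < mahlerVolume D :=
  mul_pos hD.isConvexBody.volume_toReal_pos hD.polar.isConvexBody.volume_toReal_pos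

lemma mahlerVolume_closedBall : mahlerVolume (closedBall (0 : Euc d) 1) = ωd d ^ 2 := by
  rw [mahlerVolume, polarSet_closedBall one_pos, inv_one, ωd,
    Measure.addHaar_unitClosedBall_eq_addHaar_unitBall, sq]

/-- The ratio of any two volume products in dimension `d` is at most `mahlerRatio ^ d`; the factors
come from the Blaschke–Santaló and Bourgain–Milman bounds. -/
def mahlerRatio : ℝ := 8 * Real.exp (8 * Real.pi) * (50 * Real.exp 3)

lemma one_le_mahlerRatio : 1 ≤ mahlerRatio := by
  have h8 : 1 ≤ Real.exp (8 * Real.pi) := Real.one_le_exp (by positivity)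
  have h3 : 1 ≤ Real.exp 3 := Real.one_le_exp (by norm_num)
  exact one_le_mul_of_one_le_of_one_le (by linarith) (by linarith)

lemma IsSymmConvexBody.mahlerVolume_le_pow_mul (hD : IsSymmConvexBody D)
    (hE : IsSymmConvexBody E) :
    mahlerVolume D ≤ mahlerRatio ^ d * mahlerVolume E := by
  obtain rfl | hd := d.eq_zero_or_pos
  · rw [Subsingleton.eq_univ_of_nonempty ⟨0, hD.zero_mem⟩,
      Subsingleton.eq_univ_of_nonempty ⟨0, hE.zero_mem⟩, pow_zero, one_mul]
  refine le_of_mul_le_mul_right ?_ (pow_pos (Nat.cast_pos (α := ℝ).2 hd) d)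
  calc mahlerVolume D * d ^ d ≤ (8 * Real.exp (8 * Real.pi)) ^ d := hD.mahlerVolume_mul_pow_le hd
    _ ≤ (8 * Real.exp (8 * Real.pi)) ^ d *
          ((50 * Real.exp 3) ^ d * (d ^ d * mahlerVolume E)) :=
        le_mul_of_one_le_right (by positivity) (hE.one_le_pow_mul_mahlerVolume hd)
    _ = mahlerRatio ^ d * mahlerVolume E * d ^ d := by
        rw [mahlerRatio, mul_pow (8 * Real.exp (8 * Real.pi))]
        ring

lemma IsSymmConvexBody.div_mahlerVolume_le (hD : IsSymmConvexBody D) (hE : IsSymmConvexBody E)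
    {v : ℝ} (hv : 0 ≤ v) :
    v / mahlerVolume D ≤ mahlerRatio ^ d * (v / mahlerVolume E) := by
  rw [← mul_div_assoc, div_le_div_iff₀ hD.mahlerVolume_pos hE.mahlerVolume_pos, mul_comm _ v,
    mul_assoc]
  exact mul_le_mul_of_nonneg_left (hE.mahlerVolume_le_pow_mul hD) hv

variable {C : Set (Euc d)} {α : ℝ}

lemma IsSymmConvexBody.volume_div_le_transCov (hD : IsSymmConvexBody D)
    (hC : Bornology.IsBounded C) (hα : 0 < α) :
    (volume (polarSet D)).toReal * (volume C).toReal / α ^ d / mahlerVolume D ≤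
      transCov D C α := by
  rw [div_div, div_le_iff₀ (mul_pos (by positivity) hD.mahlerVolume_pos)]
  calc (volume (polarSet D)).toReal * (volume C).toReal
      ≤ (volume (polarSet D)).toReal * (transCov D C α * (α ^ d * (volume D).toReal)) := by
        grw [hD.volume_le_transCov_mul hC hα]
    _ = transCov D C α * (α ^ d * mahlerVolume D) := by rw [mahlerVolume]; ring

lemma IsSymmConvexBody.transCov_le_volume_div (hD : IsSymmConvexBody D)
    (hC : Bornology.IsBounded C) (hα : 0 < α) :
    transCov D C α ≤ 2 ^ d * ((volume (polarSet D)).toReal * (volume (C + α • D)).toReal /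
      α ^ d / mahlerVolume D) := by
  rw [div_div, ← mul_div_assoc, le_div_iff₀ (mul_pos (by positivity) hD.mahlerVolume_pos)]
  calc transCov D C α * (α ^ d * mahlerVolume D)
      = 2 ^ d * ((volume (polarSet D)).toReal *
          (transCov D C α * ((α / 2) ^ d * (volume D).toReal))) := by
        rw [mahlerVolume, div_pow]
        field_simp
    _ ≤ 2 ^ d * ((volume (polarSet D)).toReal * (volume (C + α • D)).toReal) := by
        grw [hD.transCov_mul_le_volume hC hα]

theorem mink_cover_volume_bounds_general :
    ∃ c : ℝ, 1 ≤ c ∧ ∀ d : ℕ, ∀ C D : Set (Euc d), Bornology.IsBounded C → IsConvexBody D →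
      D = -D → ∀ α : ℝ, 0 < α →
        (c ^ d)⁻¹ * ((volume (polarSet D)).toReal * (volume C).toReal /
            (ωd d ^ 2 * α ^ d)) ≤ (transCov D C α : ℝ) ∧
        (transCov D C α : ℝ) ≤
          c ^ d * ((volume (polarSet D)).toReal * (volume (C + α • D)).toReal /
            (ωd d ^ 2 * α ^ d)) := by
  have hratio := one_le_mahlerRatio
  refine ⟨2 * mahlerRatio, by linarith, fun d C D hC hD hDneg α hα ↦ ?_⟩
  have hD : IsSymmConvexBody D := ⟨hD, hDneg⟩
  have hB := isSymmConvexBody_closedBall (d := d) one_pos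
  rw [← mahlerVolume_closedBall]
  simp only [mul_comm _ (α ^ d), ← div_div]
  constructor
  · rw [inv_mul_le_iff₀ (by positivity)]
    grw [hB.div_mahlerVolume_le hD (by positivity), hD.volume_div_le_transCov hC hα]
    gcongr
    linarith
  · grw [hD.transCov_le_volume_div hC hα, hD.div_mahlerVolume_le hB (by positivity)]
    rw [← mul_assoc, ← mul_pow]

end CoveringBounds

/-- Volumetric bounds for translative covering numbers. -/
theorem mink_cover_volume_bounds :
    ∃ c : ℝ, 1 ≤ c ∧ ∀ d : ℕ, 2 ≤ d →
      ∀ C D : Set (Euc d), IsConvexBody C → IsConvexBody D → D = -D →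
        ∀ α : ℝ, 0 < α →
          (c ^ d)⁻¹ * ((volume (polarSet D)).toReal * (volume C).toReal /
              (ωd d ^ 2 * α ^ d)) ≤ (transCov D C α : ℝ) ∧
          (transCov D C α : ℝ) ≤
            c ^ d * ((volume (polarSet D)).toReal * (volume (C + α • D)).toReal /
              (ωd d ^ 2 * α ^ d)) := by
  obtain ⟨c, hc, h⟩ := mink_cover_volume_bounds_general
  exact ⟨c, hc, fun d _ C D hC ↦ h d C D hC.1.isBounded⟩
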